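/- arXiv:1606.07877 — 4 statements merged into one kernel-verified Lean document; each statement's English description precedes it below -/
import Mathlib

section
/- Let 0 < t0 < 1/2 and C2 > 0. Let v be a smooth real-valued function on (closed disc of radius 1/2) × [0,t0] solving ∂_t v = e^{-2v} Δv (the logarithmic fast diffusion / conformal Ricci flow equation for v = (1/2) log u). Assume that v ≥ 1 and e^{-2v}|∇ log v|² ≤ C2 everywhere on B_{1/2} × [0,t0], and that t0 ≤ 1/(8 max_{B_{1/2}×[0,t0]} v). Then there exists a constant C3 > 0 depending only on C2 such that the Gauss curvature K := −e^{-2v} Δv satisfies K(x,t) ≤ C3 · v(x,t)/t for all x ∈ B_{1/4} and all t ∈ (0, t0]. -/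
open Real MeasureTheory Metric Set Filter Topology

/-- The Euclidean Laplacian of a function on `ℝ²`. -/
noncomputable def lap (f : EuclideanSpace ℝ (Fin 2) → ℝ) (x : EuclideanSpace ℝ (Fin 2)) : ℝ :=
  iteratedFDeriv ℝ 2 f x ![EuclideanSpace.single 0 1, EuclideanSpace.single 0 1] +
  iteratedFDeriv ℝ 2 f x ![EuclideanSpace.single 1 1, EuclideanSpace.single 1 1]



namespace LiYau

abbrev E2 := EuclideanSpace ℝ (Fin 2)
abbrev XT := E2 × ℝ

/-- The second function is the derivative of the first one in direction `e` on `U`. -/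
def HD (U : Set XT) (e : XT) (f f' : XT → ℝ) : Prop :=
  ∀ p ∈ U, HasDerivAt (fun s : ℝ => f (p + s • e)) (f' p) 0

noncomputable def D (e : XT) (f : XT → ℝ) (p : XT) : ℝ := fderiv ℝ f p e

variable {U : Set XT} {e a b : XT} {f f' g g' : XT → ℝ}

theorem HD.add (h : HD U e f f') (k : HD U e g g') :
    HD U e (fun p => f p + g p) (fun p => f' p + g' p) := fun p hp => (h p hp).add (k p hp)

theorem HD.sub (h : HD U e f f') (k : HD U e g g') :
    HD U e (fun p => f p - g p) (fun p => f' p - g' p) := fun p hp => (h p hp).sub (k p hp)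

theorem HD.neg (h : HD U e f f') : HD U e (fun p => -f p) (fun p => -f' p) :=
  fun p hp => (h p hp).neg

theorem HD.mul (h : HD U e f f') (k : HD U e g g') :
    HD U e (fun p => f p * g p) (fun p => f' p * g p + f p * g' p) := by
  intro p hp
  have := (h p hp).mul (k p hp)
  simp only [zero_smul, add_zero] at this
  exact this

theorem HD.exp (h : HD U e f f') :
    HD U e (fun p => Real.exp (f p)) (fun p => Real.exp (f p) * f' p) := by
  intro p hp
  have := (h p hp).exp
  simpa using this

theorem HD.constMul (c : ℝ) (h : HD U e f f') : HD U e (fun p => c * f p) (fun p => c * f' p) :=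
  fun p hp => (h p hp).const_mul c

theorem HD.const (c : ℝ) : HD U e (fun _ => c) (fun _ => 0) :=
  fun _ _ => hasDerivAt_const _ _

theorem line_mem (hU : IsOpen U) {p : XT} (hp : p ∈ U) : ∀ᶠ s : ℝ in 𝓝 0, p + s • e ∈ U := by
  have hc : Continuous (fun s : ℝ => p + s • e) := by fun_prop
  exact hc.continuousAt.eventually_mem (hU.mem_nhds (by simpa using hp))

theorem HD.congr (hU : IsOpen U) (h : HD U e f f') (hfg : ∀ p ∈ U, g p = f p) :
    HD U e g f' := by
  intro p hp
  refine (h p hp).congr_of_eventuallyEq ?_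
  filter_upwards [line_mem (e := e) hU hp] with s hs using hfg _ hs

theorem HD.uniq (h : HD U e f f') (k : HD U e f g') {p : XT} (hp : p ∈ U) : f' p = g' p :=
  (h p hp).unique (k p hp)

theorem HD.uniq' (hU : IsOpen U) (h : HD U e f f') (k : HD U e g g')
    (hfg : ∀ p ∈ U, g p = f p) {p : XT} (hp : p ∈ U) : f' p = g' p :=
  (h.congr hU hfg).uniq k hp

theorem HD.rw' (h : HD U e f f') (hg : ∀ p, g p = f p) (hg' : ∀ p, g' p = f' p) :
    HD U e g g' := by
  have h1 : g = f := funext hg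
  have h2 : g' = f' := funext hg'
  rw [h1, h2]; exact h

def Sm (U : Set XT) (f : XT → ℝ) : Prop := ContDiffOn ℝ (⊤ : ℕ∞) f U

theorem Sm.at (hU : IsOpen U) (h : Sm U f) {p : XT} (hp : p ∈ U) : ContDiffAt ℝ (⊤ : ℕ∞) f p :=
  h.contDiffAt (hU.mem_nhds hp)

theorem Sm.diff (hU : IsOpen U) (h : Sm U f) {p : XT} (hp : p ∈ U) : DifferentiableAt ℝ f p :=
  (h.at hU hp).differentiableAt (by simp)

theorem Sm.fd (hU : IsOpen U) (h : Sm U f) : ContDiffOn ℝ (⊤ : ℕ∞) (fderiv ℝ f) U := by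
  have h' : ContDiffOn ℝ (⊤ : ℕ∞) f U := h
  exact h'.fderiv_of_isOpen hU (by simp)

theorem Sm.D (hU : IsOpen U) (h : Sm U f) (e : XT) : Sm U (LiYau.D e f) :=
  (h.fd hU).clm_apply contDiffOn_const

theorem Sm.hd (hU : IsOpen U) (h : Sm U f) (e : XT) : HD U e f (LiYau.D e f) := by
  intro p hp
  have := (h.diff hU hp).hasFDerivAt.hasLineDerivAt e
  exact this

theorem D_D (hU : IsOpen U) (h : Sm U f) {p : XT} (hp : p ∈ U) :
    D a (D b f) p = fderiv ℝ (fderiv ℝ f) p a b := by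
  have h1 : DifferentiableAt ℝ (fderiv ℝ f) p :=
    ((h.fd hU).contDiffAt (hU.mem_nhds hp)).differentiableAt (by simp)
  have h2 := h1.hasFDerivAt.clm_apply (hasFDerivAt_const b p)
  have h3 : HasFDerivAt (D b f) _ p := h2
  show fderiv ℝ (D b f) p a = _
  rw [h3.fderiv]
  simp

theorem D_comm (hU : IsOpen U) (h : Sm U f) {p : XT} (hp : p ∈ U) :
    D a (D b f) p = D b (D a f) p := by
  rw [D_D hU h hp, D_D hU h hp]
  have := (h.at hU hp).isSymmSndFDerivAt (by
    simp only [minSmoothness_of_isRCLikeNormedField]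
    exact WithTop.coe_le_coe.2 (le_top (a := (2 : ℕ∞))))
  exact this a b

theorem D_congr (hU : IsOpen U) (h : ∀ p ∈ U, f p = g p) {p : XT} (hp : p ∈ U) :
    D a f p = D a g p := by
  unfold D
  rw [Filter.EventuallyEq.fderiv_eq]
  filter_upwards [hU.mem_nhds hp] with q hq using h q hq

theorem D_comm3 (hU : IsOpen U) (h : Sm U f) {p : XT} (hp : p ∈ U) :
    D a (D a (D b f)) p = D b (D a (D a f)) p := by
  rw [D_congr hU (fun q hq => D_comm (a := a) (b := b) hU h hq) hp]
  exact D_comm hU (h.D hU a) hp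

/-- Second derivative test along a line. -/
theorem HD.max (hU : IsOpen U) {f'' : XT → ℝ} (h : HD U e f f') (h' : HD U e f' f'')
    {p : XT} (hp : p ∈ U) (hm : ∀ᶠ s : ℝ in 𝓝 0, f (p + s • e) ≤ f p) :
    f' p = 0 ∧ f'' p ≤ 0 := by
  set φ : ℝ → ℝ := fun s => f (p + s • e) with hφ
  have hmax : IsLocalMax φ 0 := by
    filter_upwards [hm] with s hs
    simpa [hφ] using hs
  have h0 : f' p = 0 := hmax.hasDerivAt_eq_zero (h p hp)
  refine ⟨h0, ?_⟩
  by_contra! hpos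
  have hd : ∀ᶠ s in 𝓝 (0:ℝ), deriv φ s = f' (p + s • e) := by
    filter_upwards [line_mem (e := e) hU hp] with s hs
    have h1 := h _ hs
    have h2 : HasDerivAt (fun r : ℝ => f (p + s • e + r • e)) (f' (p + s • e)) (s - s) := by
      simpa using h1
    have h3 := h2.comp_sub_const s s
    have h4 : φ = fun x => f (p + s • e + (x - s) • e) := by
      funext x
      simp only [hφ]
      congr 1
      rw [sub_smul]; abel
    rw [h4]
    exact h3.deriv
  have hdd : deriv (deriv φ) 0 = f'' p := by
    rw [Filter.EventuallyEq.deriv_eq hd]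
    exact (h' p hp).deriv
  have hmin : IsLocalMin φ 0 := isLocalMin_of_deriv_deriv_pos (by rw [hdd]; exact hpos)
    (by rw [hd.self_of_nhds]; simpa using h0) (h p hp).continuousAt
  have hc : φ =ᶠ[𝓝 0] fun _ => φ 0 := by
    filter_upwards [hmax, hmin] with s h1 h2 using le_antisymm h1 h2
  have h5 : deriv (deriv φ) 0 = 0 := by
    have : deriv φ =ᶠ[𝓝 0] deriv (fun _ => φ 0) := hc.deriv
    rw [this.deriv_eq]
    simp
  rw [hdd] at h5
  linarith

/-- One-sided first derivative test. -/
theorem HD.left (h : HD U e f f')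
    {p : XT} (hp : p ∈ U) (hm : ∀ᶠ s : ℝ in 𝓝[<] 0, f (p + s • e) ≤ f p) :
    0 ≤ f' p := by
  have h1 := (h p hp).tendsto_slope_zero_left
  refine ge_of_tendsto h1 ?_
  filter_upwards [hm, self_mem_nhdsWithin] with s hs hs'
  have hs' : s < 0 := hs'
  simp only [zero_add, zero_smul, add_zero, smul_eq_mul]
  exact mul_nonneg_of_nonpos_of_nonpos (inv_nonpos.mpr hs'.le) (by linarith)

noncomputable def e0 : XT := (EuclideanSpace.single 0 1, 0)
noncomputable def e1 : XT := (EuclideanSpace.single 1 1, 0)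
noncomputable def et : XT := (0, 1)

noncomputable def Ex (u : XT → ℝ) (p : XT) : ℝ := Real.exp (-2 * u p)
noncomputable def G (u : XT → ℝ) (p : XT) : ℝ :=
  -(D et u p) + 3 * (Ex u p * (D e0 u p * D e0 u p + D e1 u p * D e1 u p))
noncomputable def G1 (u : XT → ℝ) (e : XT) (p : XT) : ℝ :=
  -(D e (D et u) p) + 3 * (Ex u p * (2 * (D e0 u p * D e (D e0 u) p + D e1 u p * D e (D e1 u) p)
    - 2 * D e u p * (D e0 u p * D e0 u p + D e1 u p * D e1 u p)))
noncomputable def G2 (u : XT → ℝ) (e : XT) (p : XT) : ℝ :=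
  -(D e (D e (D et u)) p) + 3 * (Ex u p * (-2 * D e u p) *
    (2 * (D e0 u p * D e (D e0 u) p + D e1 u p * D e (D e1 u) p)
    - 2 * D e u p * (D e0 u p * D e0 u p + D e1 u p * D e1 u p))
    + Ex u p * (2 * (D e (D e0 u) p * D e (D e0 u) p + D e0 u p * D e (D e (D e0 u)) p
        + D e (D e1 u) p * D e (D e1 u) p + D e1 u p * D e (D e (D e1 u)) p)
      - 2 * D e (D e u) p * (D e0 u p * D e0 u p + D e1 u p * D e1 u p)
      - 4 * D e u p * (D e0 u p * D e (D e0 u) p + D e1 u p * D e (D e1 u) p)))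

variable {u : XT → ℝ}

theorem hdEx (hU : IsOpen U) (hu : Sm U u) (e : XT) :
    HD U e (Ex u) (fun p => Ex u p * (-2 * D e u p)) :=
  ((hu.hd hU e).constMul (-2)).exp

theorem hdG (hU : IsOpen U) (hu : Sm U u) (e : XT) : HD U e (G u) (G1 u e) := by
  have hx := (hu.D hU e0).hd hU e
  have hy := (hu.D hU e1).hd hU e
  have ht := (hu.D hU et).hd hU e
  refine (ht.neg.add (((hdEx hU hu e).mul ((hx.mul hx).add (hy.mul hy))).constMul 3)).rw'
    (fun p => rfl) (fun p => ?_)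
  simp only [G1]; ring

theorem hdG1 (hU : IsOpen U) (hu : Sm U u) (e : XT) : HD U e (G1 u e) (G2 u e) := by
  have hx := (hu.D hU e0).hd hU e
  have hy := (hu.D hU e1).hd hU e
  have he := (hu.D hU e).hd hU e
  have hex := ((hu.D hU e0).D hU e).hd hU e
  have hey := ((hu.D hU e1).D hU e).hd hU e
  have ht := ((hu.D hU et).D hU e).hd hU e
  have hu' := hu.hd hU e
  refine (ht.neg.add (((hdEx hU hu e).mul
    ((((hx.mul hex).add (hy.mul hey)).constMul 2).sub
      ((he.constMul 2).mul ((hx.mul hx).add (hy.mul hy))))).constMul 3)).rw'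
    (fun p => rfl) (fun p => ?_)
  simp only [G2]; ring

theorem parabolic (hU : IsOpen U) (hu : Sm U u)
    (pde : ∀ p ∈ U, D et u p = Ex u p * (D e0 (D e0 u) p + D e1 (D e1 u) p))
    {p : XT} (hp : p ∈ U) :
    G1 u et p - Ex u p * (G2 u e0 p + G2 u e1 p) ≤ -(D et u p) ^ 2 := by
  have hxx := (hu.D hU e0).D hU e0
  have hyy := (hu.D hU e1).D hU e1
  have dpde : ∀ e, D e (D et u) p = Ex u p * (-2 * D e u p) * (D e0 (D e0 u) p + D e1 (D e1 u) p)
      + Ex u p * (D e (D e0 (D e0 u)) p + D e (D e1 (D e1 u)) p) := fun e =>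
    HD.uniq' hU ((hu.D hU et).hd hU e)
      ((hdEx hU hu e).mul ((hxx.hd hU e).add (hyy.hd hU e))) (fun q hq => (pde q hq).symm) hp
  have c1 : D et (D e0 u) p = D e0 (D et u) p := D_comm hU hu hp
  have c2 : D et (D e1 u) p = D e1 (D et u) p := D_comm hU hu hp
  have c3 : D e1 (D e0 u) p = D e0 (D e1 u) p := D_comm hU hu hp
  have c4 : D e0 (D e0 (D et u)) p = _ := D_comm3 hU hu hp
  have c5 : D e1 (D e1 (D et u)) p = _ := D_comm3 hU hu hp
  have c6 : D e0 (D e0 (D e1 u)) p = _ := D_comm3 hU hu hp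
  have c7 : D e1 (D e1 (D e0 u)) p = _ := D_comm3 hU hu hp
  have d0 := dpde e0
  have d1 := dpde e1
  have dt := dpde et
  have P := pde p hp
  simp only [G1, G2]
  rw [c1, c2, c3, c4, c5, c6, c7, d0, d1, dt, P]
  generalize Ex u p = E
  generalize D e0 u p = x
  generalize D e1 u p = y
  generalize D e0 (D e0 u) p = xx
  generalize D e1 (D e1 u) p = yy
  generalize D e0 (D e1 u) p = xy
  have k : 0 ≤ 3 * E ^ 2 * ((xx - x^2 + y^2) - (yy + x^2 - y^2)) ^ 2
      + 12 * E ^ 2 * (xy - 2 * x * y) ^ 2 := by positivity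
  nlinarith [k]

theorem alg2 {C2 E τ ψ X Y a b : ℝ} (hC2 : 0 < C2) (hE : 0 < E) (hE1 : E ≤ 1) (hτ : 0 < τ)
    (hτ1 : τ ≤ 1 / 2) (hψ : 0 < ψ) (hψ1 : ψ ≤ 1) (hXY : X ^ 2 + Y ^ 2 ≤ 1)
    (hab : E * (a ^ 2 + b ^ 2) ≤ C2) :
    ψ ^ 2 + τ * (E * (8 * ψ - 8 * (X ^ 2 + Y ^ 2))
      + 8 * E * (ψ * (X * a + Y * b)) + 32 * E * (X ^ 2 + Y ^ 2)) ≤ 23 + 2 * C2 := by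
  have f1 : ψ ^ 2 ≤ 1 := by nlinarith
  have f2 : E * ψ ≤ 1 := by nlinarith
  have f3 : E * (X ^ 2 + Y ^ 2) ≤ 1 := by nlinarith [sq_nonneg X, sq_nonneg Y]
  have f3' : 0 ≤ E * (X ^ 2 + Y ^ 2) := by positivity
  have f4 : 2 * (E * (ψ * (X * a + Y * b))) ≤ 1 + C2 := by
    have g1 : 2 * (X * a + Y * b) ≤ (X ^ 2 + Y ^ 2) + (a ^ 2 + b ^ 2) := by
      nlinarith [sq_nonneg (X - a), sq_nonneg (Y - b)]
    have g2 : 0 ≤ (X ^ 2 + Y ^ 2) + (a ^ 2 + b ^ 2) := by positivity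
    have g3 := mul_le_mul_of_nonneg_left g1 (show 0 ≤ E * ψ by positivity)
    have g4 : ψ * (E * ((X ^ 2 + Y ^ 2) + (a ^ 2 + b ^ 2))) ≤
        E * ((X ^ 2 + Y ^ 2) + (a ^ 2 + b ^ 2)) :=
      mul_le_of_le_one_left (by positivity) hψ1
    linarith
  have f5 : (E * (8 * ψ - 8 * (X ^ 2 + Y ^ 2))
    + 8 * E * (ψ * (X * a + Y * b)) + 32 * E * (X ^ 2 + Y ^ 2)) ≤ 44 + 4 * C2 := by linarith
  have f6 := mul_le_mul_of_nonneg_left f5 hτ.le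
  have f7 : τ * (44 + 4 * C2) ≤ 1 / 2 * (44 + 4 * C2) :=
    mul_le_mul_of_nonneg_right hτ1 (by positivity)
  linarith

set_option maxHeartbeats 2000000 in
theorem alg {C2 E v τ ψ X Y M G vx vy vt vxx vyy Gx Gy Gt Gxx Gyy : ℝ}
    (hC2 : 0 < C2) (hE : 0 < E) (hE1 : E ≤ 1) (hv : 1 ≤ v) (hτ : 0 < τ) (hτ1 : τ ≤ 1 / 2)
    (hτv : τ * v ≤ 1 / 8) (hψ : 0 < ψ) (hψ1 : ψ ≤ 1) (hXY : X ^ 2 + Y ^ 2 ≤ 1) (hM : 0 < M)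
    (hMG : τ * ψ ^ 2 * G = M * v) (hG : G = -vt + 3 * (E * (vx ^ 2 + vy ^ 2)))
    (hgrad : E * (vx ^ 2 + vy ^ 2) ≤ C2 * v ^ 2)
    (hx : τ * (-4 * ψ * X * G + ψ ^ 2 * Gx) = M * vx)
    (hy : τ * (-4 * ψ * Y * G + ψ ^ 2 * Gy) = M * vy)
    (hxx : τ * ((8 * X ^ 2 - 4 * ψ) * G + 2 * (-4 * ψ * X) * Gx + ψ ^ 2 * Gxx) - M * vxx ≤ 0)
    (hyy : τ * ((8 * Y ^ 2 - 4 * ψ) * G + 2 * (-4 * ψ * Y) * Gy + ψ ^ 2 * Gyy) - M * vyy ≤ 0)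
    (ht : 0 ≤ ψ ^ 2 * G + τ * ψ ^ 2 * Gt - M * vt)
    (pde : vt = E * (vxx + vyy)) (par : Gt - E * (Gxx + Gyy) ≤ -vt ^ 2) :
    M ≤ 92 + 9 * C2 := by
  have hv0 : 0 < v := by linarith
  have hGpos : 0 < G := by
    have h1 : 0 < τ * ψ ^ 2 * G := by rw [hMG]; positivity
    exact (pos_iff_pos_of_mul_pos h1).mp (by positivity)
  obtain ⟨a, ha⟩ : ∃ a, vx = a * v := ⟨vx / v, by field_simp⟩
  obtain ⟨b, hb⟩ : ∃ b, vy = b * v := ⟨vy / v, by field_simp⟩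
  have hab : E * (a ^ 2 + b ^ 2) ≤ C2 := by
    have : E * (a ^ 2 + b ^ 2) * v ^ 2 ≤ C2 * v ^ 2 := by
      rw [ha, hb] at hgrad; linarith
    exact le_of_mul_le_mul_right this (by positivity)
  have hGx : ψ * Gx = ψ * G * a + 4 * X * G := by
    have h1 : τ * ψ * (ψ * Gx) = τ * ψ * (ψ * G * a + 4 * X * G) := by
      rw [ha] at hx; linear_combination hx - a * hMG
    exact mul_left_cancel₀ (by positivity) h1
  have hGy : ψ * Gy = ψ * G * b + 4 * Y * G := by
    have h1 : τ * ψ * (ψ * Gy) = τ * ψ * (ψ * G * b + 4 * Y * G) := by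
      rw [hb] at hy; linear_combination hy - b * hMG
    exact mul_left_cancel₀ (by positivity) h1
  have hxx' := mul_le_mul_of_nonneg_left hxx hE.le
  have hyy' := mul_le_mul_of_nonneg_left hyy hE.le
  have par' := mul_le_mul_of_nonneg_left par (show 0 ≤ τ * ψ ^ 2 by positivity)
  have s1 : 0 ≤ G * (ψ ^ 2 + τ * (E * (8 * ψ - 8 * (X ^ 2 + Y ^ 2))
      + 8 * E * (ψ * (X * a + Y * b)) + 32 * E * (X ^ 2 + Y ^ 2))) - τ * ψ ^ 2 * vt ^ 2 := by
    have e1 : E * (τ * (2 * (-4 * ψ * X) * Gx)) = - 8 * E * τ * X * (ψ * G * a + 4 * X * G) := by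
      rw [← hGx]; ring
    have e2 : E * (τ * (2 * (-4 * ψ * Y) * Gy)) = - 8 * E * τ * Y * (ψ * G * b + 4 * Y * G) := by
      rw [← hGy]; ring
    have e3 : M * vt = E * (M * vxx) + E * (M * vyy) := by rw [pde]; ring
    linarith
  have s2 := alg2 hC2 hE hE1 hτ hτ1 hψ hψ1 hXY hab
  have s3 := mul_le_mul_of_nonneg_left s2 hGpos.le
  have s4 : τ * ψ ^ 2 * vt ^ 2 ≤ G * (23 + 2 * C2) := by linarith
  have s5 : (τ * ψ ^ 2 * vt) ^ 2 ≤ M * v * (23 + 2 * C2) := by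
    have := mul_le_mul_of_nonneg_left s4 (show 0 ≤ τ * ψ ^ 2 by positivity)
    rw [← hMG]; linarith
  by_contra! hcon
  have s6 : τ * ψ ^ 2 * (E * (vx ^ 2 + vy ^ 2)) ≤ C2 * v / 8 := by
    have g1 : τ * ψ ^ 2 * (E * (vx ^ 2 + vy ^ 2)) ≤ τ * 1 * (C2 * v ^ 2) := by
      have : ψ ^ 2 ≤ 1 := pow_le_one₀ hψ.le hψ1
      gcongr
    have g2 := mul_le_mul_of_nonneg_left hτv (show 0 ≤ C2 * v by positivity)
    linarith
  have s7 : M * v / 2 ≤ -(τ * ψ ^ 2 * vt) := by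
    have : M * v = -(τ * ψ ^ 2 * vt) + 3 * (τ * ψ ^ 2 * (E * (vx ^ 2 + vy ^ 2))) := by
      rw [← hMG, hG]; ring
    have hp : 0 < M * v - 9 * C2 * v := by
      rw [← sub_mul]; exact mul_pos (by linarith) hv0
    have hp' : 0 < C2 * v := by positivity
    linarith
  have s8 : (M * v / 2) ^ 2 ≤ M * v * (23 + 2 * C2) := by
    have : (M * v / 2) ^ 2 ≤ (-(τ * ψ ^ 2 * vt)) ^ 2 := by gcongr
    linarith [neg_sq (τ * ψ ^ 2 * vt)]
  have hMv : 0 < M * v := by positivity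
  have s9 : M * v ≤ 4 * (23 + 2 * C2) := by
    have e : (M * v / 2) ^ 2 = M * v * (M * v / 4) := by ring
    rw [e] at s8
    linarith [le_of_mul_le_mul_left s8 hMv]
  have : M * 1 ≤ M * v := mul_le_mul_of_nonneg_left hv hM.le
  linarith

noncomputable def psi (p : XT) : ℝ := 9 / 64 - p.1 0 * p.1 0 - p.1 1 * p.1 1

theorem hdCoord (i : Fin 2) (e : XT) : HD U e (fun p => p.1 i) (fun _ => e.1 i) := by
  intro p _
  have := ((hasDerivAt_id (0:ℝ)).mul_const (e.1 i)).const_add (p.1 i)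
  simpa using this

theorem hdTime (c : ℝ) (e : XT) : HD U e (fun p => p.2 - c) (fun _ => e.2) := by
  intro p _
  have := (((hasDerivAt_id (0:ℝ)).mul_const e.2).const_add p.2).sub_const c
  simpa using this

theorem hdPsi (e : XT) : HD U e psi (fun p => -2 * (e.1 0 * p.1 0 + e.1 1 * p.1 1)) := by
  have h0 := hdCoord (U := U) 0 e
  have h1 := hdCoord (U := U) 1 e
  refine (((HD.const (9/64)).sub (h0.mul h0)).sub (h1.mul h1)).rw' (fun p => rfl) (fun p => ?_)
  ring

noncomputable def H (u : XT → ℝ) (ε M : ℝ) (p : XT) : ℝ :=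
  (p.2 - ε) * (psi p * psi p) * G u p - M * u p

theorem hdH (hU : IsOpen U) (hu : Sm U u) (ε M : ℝ) (e : XT) :
    HD U e (H u ε M) (fun p => (e.2 * (psi p * psi p)
      + (p.2 - ε) * (-4 * psi p * (e.1 0 * p.1 0 + e.1 1 * p.1 1))) * G u p
      + (p.2 - ε) * (psi p * psi p) * G1 u e p - M * D e u p) := by
  refine ((((hdTime ε e).mul ((hdPsi e).mul (hdPsi e))).mul (hdG hU hu e)).sub
    ((hu.hd hU e).constMul M)).rw' (fun p => rfl) (fun p => ?_)
  ring

theorem hdH2 (hU : IsOpen U) (hu : Sm U u) (ε M : ℝ) (e : XT) (he : e.2 = 0) :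
    HD U e (fun p => (e.2 * (psi p * psi p)
      + (p.2 - ε) * (-4 * psi p * (e.1 0 * p.1 0 + e.1 1 * p.1 1))) * G u p
      + (p.2 - ε) * (psi p * psi p) * G1 u e p - M * D e u p)
     (fun p => (p.2 - ε) * ((8 * (e.1 0 * p.1 0 + e.1 1 * p.1 1) ^ 2
        - 4 * psi p * (e.1 0 ^ 2 + e.1 1 ^ 2)) * G u p
        + 2 * (-4 * psi p * (e.1 0 * p.1 0 + e.1 1 * p.1 1)) * G1 u e p + psi p ^ 2 * G2 u e p)
        - M * D e (D e u) p) := by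
  have hT := hdTime (U := U) ε e
  have hP := hdPsi (U := U) e
  have hL := ((hdCoord (U := U) 0 e).constMul (e.1 0)).add ((hdCoord (U := U) 1 e).constMul (e.1 1))
  refine (((((hT.mul (((hP.constMul (-4)).mul hL)))).mul (hdG hU hu e)).add
    ((hT.mul (hP.mul hP)).mul (hdG1 hU hu e))).sub
    (((hu.D hU e).hd hU e).constMul M)).rw' (fun p => ?_) (fun p => ?_)
  · rw [he]; ring
  · rw [he]; ring

theorem norm_sq2 (x : E2) : ‖x‖ ^ 2 = x 0 * x 0 + x 1 * x 1 := by
  rw [EuclideanSpace.norm_sq_eq, Fin.sum_univ_two]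
  simp [sq]

theorem Sm.cont (hU : IsOpen U) (h : Sm U f) : ContinuousOn f U := ContDiffOn.continuousOn h

theorem contG (hU : IsOpen U) (hu : Sm U u) : ContinuousOn (G u) U := by
  have h0 := (hu.D hU e0).cont hU
  have h1 := (hu.D hU e1).cont hU
  have ht := (hu.D hU et).cont hU
  have h := hu.cont hU
  unfold G Ex
  fun_prop

theorem bound {C2 t0 ε T : ℝ} (hC2 : 0 < C2) (ht0 : t0 < 1 / 2) (hε : 0 < ε) (hεT : ε < T)
    (hT : T < t0) (hU : IsOpen U) (hUe : U = ball (0 : E2) (1/2) ×ˢ Ioo 0 t0) (hu : Sm U u)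
    (pde : ∀ p ∈ U, D et u p = Ex u p * (D e0 (D e0 u) p + D e1 (D e1 u) p))
    (h1 : ∀ p ∈ U, 1 ≤ u p)
    (hg : ∀ p ∈ U, Ex u p * (D e0 u p ^ 2 + D e1 u p ^ 2) ≤ C2 * u p ^ 2)
    (h8 : ∀ p ∈ U, t0 * u p ≤ 1 / 8) (x : E2) (hx : x ∈ ball (0 : E2) (1/4)) :
    (T - ε) * (-(D et u (x, T))) ≤ 164 * (92 + 9 * C2) * u (x, T) := by
  set Kc : Set XT := closedBall (0 : E2) (3/8) ×ˢ Icc ε T with hKc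
  have hKU : Kc ⊆ U := by
    rw [hUe]
    exact prod_mono (closedBall_subset_ball (by norm_num))
      (fun t ht => ⟨by linarith [ht.1], by linarith [ht.2]⟩)
  have hcomp : IsCompact Kc := (isCompact_closedBall _ _).prod isCompact_Icc
  have hpsi : Continuous psi := by unfold psi; fun_prop
  have hcont : ContinuousOn (fun p : XT => (p.2 - ε) * (psi p * psi p) * G u p / u p) Kc := by
    have hG := (contG hU hu).mono hKU
    have hu' := (hu.cont hU).mono hKU
    refine ContinuousOn.div (ContinuousOn.mul (by fun_prop) hG) hu' ?_
    intro p hp; have := h1 p (hKU hp); linarith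
  have hxK : (x, T) ∈ Kc :=
    ⟨ball_subset_closedBall (ball_subset_ball (by norm_num) hx), hεT.le, le_rfl⟩
  obtain ⟨p, hpK, hmax⟩ := hcomp.exists_isMaxOn ⟨_, hxK⟩ hcont
  set M := (p.2 - ε) * (psi p * psi p) * G u p / u p with hM
  have hpU := hKU hpK
  have hup : 0 < u p := by linarith [h1 p hpU]
  have hH : ∀ q ∈ Kc, H u ε M q ≤ 0 := by
    intro q hq
    have h2 : (q.2 - ε) * (psi q * psi q) * G u q / u q ≤ M := hmax hq
    have hq0 : 0 < u q := by linarith [h1 q (hKU hq)]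
    rw [div_le_iff₀ hq0] at h2
    unfold H; linarith
  have hMp : (p.2 - ε) * (psi p * psi p) * G u p = M * u p := by
    rw [hM]; field_simp
  have hHp : H u ε M p = 0 := by unfold H; linarith
  have psi_eq : ∀ q : XT, psi q = 9 / 64 - ‖q.1‖ ^ 2 := by
    intro q; rw [norm_sq2]; unfold psi; ring
  have hMb : M ≤ 92 + 9 * C2 := by
    by_cases hM0 : M ≤ 0
    · linarith
    push Not at hM0
    have hne : (p.2 - ε) * (psi p * psi p) * G u p ≠ 0 := by rw [hMp]; positivity
    have hτ : 0 < p.2 - ε := by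
      have : p.2 - ε ≠ 0 := by intro h; rw [h] at hne; simp at hne
      exact lt_of_le_of_ne (by linarith [hpK.2.1]) this.symm
    have hn : ‖p.1‖ ≤ 3 / 8 := by simpa using hpK.1
    have hψ : 0 < psi p := by
      have h2 : psi p ≠ 0 := by intro h; rw [h] at hne; simp at hne
      refine lt_of_le_of_ne ?_ h2.symm
      rw [psi_eq]; nlinarith [norm_nonneg p.1]
    have hn' : ‖p.1‖ < 3 / 8 := by
      refine lt_of_le_of_ne hn ?_
      intro h; rw [psi_eq, h] at hψ; norm_num at hψ
    have hsp : ∀ e : XT, e.2 = 0 → ∀ᶠ s : ℝ in 𝓝 0, H u ε M (p + s • e) ≤ H u ε M p := by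
      intro e he
      have hc : Continuous (fun s : ℝ => (p + s • e).1) := by fun_prop
      have hev : ∀ᶠ s : ℝ in 𝓝 0, (p + s • e).1 ∈ ball (0 : E2) (3/8) :=
        hc.continuousAt.eventually_mem (isOpen_ball.mem_nhds (by simpa using hn'))
      filter_upwards [hev] with s hs
      rw [hHp]
      refine hH _ ⟨ball_subset_closedBall hs, ?_⟩
      simpa [he] using hpK.2
    have htm : ∀ᶠ s : ℝ in 𝓝[<] 0, H u ε M (p + s • et) ≤ H u ε M p := by
      have hev : ∀ᶠ s : ℝ in 𝓝[<] 0, s ∈ Ioo (ε - p.2) 0 := Ioo_mem_nhdsLT (by linarith)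
      filter_upwards [hev] with s hs
      rw [hHp]
      refine hH _ ⟨?_, ?_⟩
      · simpa [et] using hpK.1
      · have h2 := hpK.2.2
        simp only [et, Prod.snd_add, Prod.smul_snd, smul_eq_mul, mul_one]
        exact ⟨by linarith [hs.1], by linarith [hs.2]⟩
    obtain ⟨hx1, hx2⟩ := (hdH hU hu ε M e0).max hU (hdH2 hU hu ε M e0 rfl) hpU (hsp e0 rfl)
    obtain ⟨hy1, hy2⟩ := (hdH hU hu ε M e1).max hU (hdH2 hU hu ε M e1 rfl) hpU (hsp e1 rfl)
    have hT1 := (hdH hU hu ε M et).left hpU htm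
    simp only [e0, PiLp.single_apply] at hx1 hx2
    simp only [e1, PiLp.single_apply] at hy1 hy2
    simp [et] at hx1 hx2 hy1 hy2 hT1
    rw [← e0] at hx1 hx2
    rw [← e1] at hy1 hy2
    rw [← et] at hT1
    have hpt := hpK.2.2
    have hu8 := h8 p hpU
    have hE1 : Ex u p ≤ 1 := by
      unfold Ex; rw [Real.exp_le_one_iff]; linarith
    have hnn := norm_sq2 p.1
    refine alg (E := Ex u p) (v := u p) (τ := p.2 - ε) (ψ := psi p) (X := p.1 0) (Y := p.1 1)
      (G := G u p) (vx := D e0 u p) (vy := D e1 u p) (vt := D et u p)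
      (vxx := D e0 (D e0 u) p) (vyy := D e1 (D e1 u) p) (Gx := G1 u e0 p) (Gy := G1 u e1 p)
      (Gt := G1 u et p) (Gxx := G2 u e0 p) (Gyy := G2 u e1 p)
      hC2 (Real.exp_pos _) hE1 (h1 p hpU) hτ (by linarith) ?_ hψ ?_ ?_ hM0 ?_ ?_ (hg p hpU)
      ?_ ?_ ?_ ?_ ?_ (pde p hpU) (parabolic hU hu pde hpU)
    · have : (p.2 - ε) * u p ≤ t0 * u p := by gcongr; linarith
      linarith
    · rw [psi_eq]; nlinarith [sq_nonneg ‖p.1‖]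
    · nlinarith [norm_nonneg p.1]
    · rw [← hMp]; ring
    · unfold G; ring
    · linarith
    · linarith
    · linarith
    · linarith
    · linarith
  have hfin : H u ε M (x, T) ≤ 0 := hH _ hxK
  have hxT := hKU hxK
  have hux : 0 < u (x, T) := by linarith [h1 _ hxT]
  unfold H at hfin
  simp only at hfin
  have hψx : 5 / 64 ≤ psi (x, T) := by
    have : ‖x‖ < 1 / 4 := by simpa using hx
    rw [psi_eq]; simp only; nlinarith [norm_nonneg x]
  have hψ2 : 1 / 164 ≤ psi (x, T) * psi (x, T) := by nlinarith
  have hGK : -(D et u (x, T)) ≤ G u (x, T) := by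
    have : 0 ≤ Ex u (x, T) := (Real.exp_pos _).le
    unfold G
    have : 0 ≤ 3 * (Ex u (x, T) * (D e0 u (x, T) * D e0 u (x, T) + D e1 u (x, T) * D e1 u (x, T))) := by
      have := mul_self_nonneg (D e0 u (x, T))
      have := mul_self_nonneg (D e1 u (x, T))
      positivity
    linarith
  by_cases hK : -(D et u (x, T)) ≤ 0
  · have : (T - ε) * (-(D et u (x, T))) ≤ 0 :=
      mul_nonpos_of_nonneg_of_nonpos (by linarith) hK
    have : 0 ≤ 164 * (92 + 9 * C2) * u (x, T) := by positivity
    linarith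
  · push Not at hK
    have a1 : (T - ε) * (1 / 164) * (-(D et u (x, T))) ≤
        (T - ε) * (psi (x, T) * psi (x, T)) * G u (x, T) := by
      have : 0 < T - ε := by linarith
      gcongr
    have a2 : M * u (x, T) ≤ (92 + 9 * C2) * u (x, T) := by gcongr
    linarith

theorem main_aux {C2 t0 : ℝ} (hC2 : 0 < C2) (ht00 : 0 < t0) (ht0 : t0 < 1 / 2)
    (v : E2 → ℝ → ℝ)
    (hs : ContDiffOn ℝ (⊤ : ℕ∞) (fun p : E2 × ℝ => v p.1 p.2) (closedBall 0 (1/2) ×ˢ Icc 0 t0))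
    (pde : ∀ x ∈ closedBall (0 : E2) (1/2), ∀ t ∈ Icc (0:ℝ) t0,
          deriv (fun s => v x s) t = Real.exp (-2 * v x t) * lap (fun y => v y t) x)
    (h1 : ∀ x ∈ closedBall (0 : E2) (1/2), ∀ t ∈ Icc (0:ℝ) t0, 1 ≤ v x t)
    (hg : ∀ x ∈ closedBall (0 : E2) (1/2), ∀ t ∈ Icc (0:ℝ) t0,
          Real.exp (-2 * v x t) * ‖gradient (fun y => Real.log (v y t)) x‖^2 ≤ C2)
    (h8 : ∀ x ∈ closedBall (0 : E2) (1/2), ∀ t ∈ Icc (0:ℝ) t0, t0 ≤ 1 / (8 * v x t))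
    (x : E2) (hx : x ∈ ball (0 : E2) (1/4)) (t : ℝ) (ht : t ∈ Ioo 0 t0) :
    DifferentiableAt ℝ (fun s => v x s) t ∧
    t * (-(deriv (fun s => v x s) t)) ≤ 164 * (92 + 9 * C2) * v x t := by
  set U : Set XT := ball (0 : E2) (1/2) ×ˢ Ioo 0 t0 with hUe
  have hU : IsOpen U := isOpen_ball.prod isOpen_Ioo
  have hUK : U ⊆ closedBall 0 (1/2) ×ˢ Icc 0 t0 :=
    prod_mono ball_subset_closedBall Ioo_subset_Icc_self
  set u : XT → ℝ := fun p => v p.1 p.2 with hu0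
  have hu : Sm U u := hs.mono hUK
  -- time derivative
  have hdt : ∀ p ∈ U, HasDerivAt (fun s => v p.1 s) (D et u p) p.2 := by
    intro p hp
    have := (hu.diff hU hp).hasFDerivAt.comp_hasDerivAt p.2
      ((hasDerivAt_const p.2 p.1).prodMk (hasDerivAt_id p.2))
    exact this
  have hdx : ∀ p ∈ U, HasFDerivAt (fun y => v y p.2)
      ((fderiv ℝ u p).comp (ContinuousLinearMap.inl ℝ E2 ℝ)) p.1 := by
    intro p hp
    have h2 : HasFDerivAt (fun y : E2 => (y, p.2)) (ContinuousLinearMap.inl ℝ E2 ℝ) p.1 :=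
      hasFDerivAt_prodMk_left p.1 p.2
    have h3 : HasFDerivAt u (fderiv ℝ u p) (p.1, p.2) := (hu.diff hU hp).hasFDerivAt
    exact h3.comp p.1 h2
  have hlap1 : ∀ p ∈ U, ∀ w : E2, iteratedFDeriv ℝ 2 (fun y => v y p.2) p.1 ![w, w]
      = D (w, 0) (D (w, 0) u) p := by
    intro p hp w
    rw [iteratedFDeriv_two_apply, D_D hU hu hp]
    simp only [Matrix.cons_val_zero, Matrix.cons_val_one]
    have hev : (fderiv ℝ fun y => v y p.2) =ᶠ[𝓝 p.1] fun y =>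
        (fderiv ℝ u (y, p.2)).comp (ContinuousLinearMap.inl ℝ E2 ℝ) := by
      filter_upwards [isOpen_ball.mem_nhds hp.1] with y hy
      exact (hdx (y, p.2) ⟨hy, hp.2⟩).fderiv
    rw [hev.fderiv_eq]
    have h1 : HasFDerivAt (fderiv ℝ u) (fderiv ℝ (fderiv ℝ u) p) (p.1, p.2) :=
      (((hu.fd hU).contDiffAt (hU.mem_nhds hp)).differentiableAt (by simp)).hasFDerivAt
    have h2 : HasFDerivAt (fun y : E2 => (y, p.2)) (ContinuousLinearMap.inl ℝ E2 ℝ) p.1 :=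
      hasFDerivAt_prodMk_left p.1 p.2
    have h3 := (h1.comp p.1 h2).clm_comp
      (hasFDerivAt_const (ContinuousLinearMap.inl ℝ E2 ℝ) p.1)
    have h4 : HasFDerivAt (fun y =>
        (fderiv ℝ u (y, p.2)).comp (ContinuousLinearMap.inl ℝ E2 ℝ)) _ p.1 := h3
    rw [h4.fderiv]
    simp
  have hpde : ∀ p ∈ U, D et u p = Ex u p * (D e0 (D e0 u) p + D e1 (D e1 u) p) := by
    intro p hp
    have h2 := pde p.1 (hUK hp).1 p.2 (hUK hp).2
    rw [(hdt p hp).deriv, lap, hlap1 p hp, hlap1 p hp] at h2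
    exact h2
  have h1' : ∀ p ∈ U, 1 ≤ u p := fun p hp => h1 p.1 (hUK hp).1 p.2 (hUK hp).2
  have hg' : ∀ p ∈ U, Ex u p * (D e0 u p ^ 2 + D e1 u p ^ 2) ≤ C2 * u p ^ 2 := by
    intro p hp
    have h2 := hg p.1 (hUK hp).1 p.2 (hUK hp).2
    have hup : 0 < u p := by linarith [h1' p hp]
    have hlog := (hdx p hp).log hup.ne'
    have hc : ∀ i : Fin 2, (gradient (fun y => Real.log (v y p.2)) p.1) i
        = (u p)⁻¹ * D (EuclideanSpace.single i 1, 0) u p := by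
      intro i
      have h3 : inner ℝ (gradient (fun y => Real.log (v y p.2)) p.1) (EuclideanSpace.single i (1:ℝ))
        = fderiv ℝ (fun y => Real.log (v y p.2)) p.1 (EuclideanSpace.single i (1:ℝ)) := by
        unfold gradient
        exact InnerProductSpace.toDual_symm_apply
      rw [hlog.fderiv] at h3
      rw [EuclideanSpace.inner_single_right] at h3
      simpa [D, hu0] using h3
    rw [norm_sq2, hc 0, hc 1] at h2
    have h4 : Ex u p * (D e0 u p ^ 2 + D e1 u p ^ 2) = Ex u p *
      ((u p)⁻¹ * D e0 u p * ((u p)⁻¹ * D e0 u p) + (u p)⁻¹ * D e1 u p * ((u p)⁻¹ * D e1 u p))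
        * u p ^ 2 := by field_simp
    rw [h4]
    exact mul_le_mul_of_nonneg_right h2 (by positivity)
  have h8' : ∀ p ∈ U, t0 * u p ≤ 1 / 8 := by
    intro p hp
    have h2 : t0 ≤ 1 / (8 * u p) := h8 p.1 (hUK hp).1 p.2 (hUK hp).2
    have hup : 0 < u p := by linarith [h1' p hp]
    rw [le_div_iff₀ (by positivity)] at h2
    linarith
  have hxU : (x, t) ∈ U := ⟨ball_subset_ball (by norm_num) hx, ht⟩
  have hd := hdt _ hxU
  refine ⟨hd.differentiableAt, ?_⟩
  rw [hd.deriv]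
  have hlim : Tendsto (fun ε : ℝ => (t - ε) * (-(D et u (x, t)))) (𝓝[>] 0)
      (𝓝 ((t - 0) * (-(D et u (x, t))))) := by
    have : Continuous (fun ε : ℝ => (t - ε) * (-(D et u (x, t)))) := by fun_prop
    exact this.continuousAt.tendsto.mono_left nhdsWithin_le_nhds
  rw [sub_zero] at hlim
  refine le_of_tendsto hlim ?_
  have hev : ∀ᶠ ε : ℝ in 𝓝[>] 0, ε ∈ Ioo 0 t := Ioo_mem_nhdsGT ht.1
  filter_upwards [hev] with ε hε
  exact bound hC2 ht0 hε.1 hε.2 ht.2 hU hUe hu hpde h1' hg' h8' x hx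

end LiYau

/-- **Li–Yau type differential Harnack estimate.**
If `v` solves `∂ₜ v = e^{-2v} Δv` on `B̄_{1/2} × [0,t₀]`, with `v ≥ 1`,
`e^{-2v}|∇ log v|² ≤ C₂`, and `t₀ ≤ 1/(8 max v)`, then the Gauss curvature
`K = -e^{-2v} Δv` satisfies `K ≤ C₃ v / t` on `B_{1/4} × (0,t₀]`,
where `C₃` depends only on `C₂`. -/
theorem liYau_harnack (C2 : ℝ) (hC2 : 0 < C2) :
    ∃ C3 : ℝ, 0 < C3 ∧
      ∀ (t0 : ℝ) (v : EuclideanSpace ℝ (Fin 2) → ℝ → ℝ),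
        0 < t0 → t0 < 1/2 →
        ContDiffOn ℝ (⊤ : ℕ∞) (fun p : EuclideanSpace ℝ (Fin 2) × ℝ => v p.1 p.2)
          (closedBall 0 (1/2) ×ˢ Icc 0 t0) →
        (∀ x ∈ closedBall (0 : EuclideanSpace ℝ (Fin 2)) (1/2), ∀ t ∈ Icc (0:ℝ) t0,
          deriv (fun s => v x s) t = exp (-2 * v x t) * lap (fun y => v y t) x) →
        (∀ x ∈ closedBall (0 : EuclideanSpace ℝ (Fin 2)) (1/2), ∀ t ∈ Icc (0:ℝ) t0,
          1 ≤ v x t) →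
        (∀ x ∈ closedBall (0 : EuclideanSpace ℝ (Fin 2)) (1/2), ∀ t ∈ Icc (0:ℝ) t0,
          exp (-2 * v x t) * ‖gradient (fun y => log (v y t)) x‖^2 ≤ C2) →
        (∀ x ∈ closedBall (0 : EuclideanSpace ℝ (Fin 2)) (1/2), ∀ t ∈ Icc (0:ℝ) t0,
          t0 ≤ 1 / (8 * v x t)) →
        ∀ x ∈ ball (0 : EuclideanSpace ℝ (Fin 2)) (1/4), ∀ t ∈ Ioc (0:ℝ) t0,
          -(exp (-2 * v x t) * lap (fun y => v y t) x) ≤ C3 * v x t / t := by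
  refine ⟨164 * (92 + 9 * C2), by positivity, ?_⟩
  intro t0 v ht00 ht0 hs pde h1 hg h8 x hx t ht
  have main := LiYau.main_aux hC2 ht00 ht0 v hs pde h1 hg h8 x hx
  have hxc : x ∈ closedBall (0 : EuclideanSpace ℝ (Fin 2)) (1/2) :=
    ball_subset_closedBall (ball_subset_ball (by norm_num) hx)
  rw [← pde x hxc t ⟨ht.1.le, ht.2⟩, le_div_iff₀ ht.1]
  have hC : 0 < 164 * (92 + 9 * C2) := by positivity
  generalize 164 * (92 + 9 * C2) = C at *
  rcases lt_or_eq_of_le ht.2 with hlt | heq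
  · linarith [(main t ⟨ht.1, hlt⟩).2]
  subst heq
  have hvt := h1 x hxc t ⟨ht.1.le, le_rfl⟩
  by_cases hdiff : DifferentiableAt ℝ (fun s => v x s) t
  swap
  · rw [deriv_zero_of_not_differentiableAt hdiff]
    simp only [neg_zero, zero_mul]
    positivity
  -- at the final time use the mean value theorem
  set f : ℝ → ℝ := fun s => v x s with hf
  have hcont : ContinuousOn f (Icc 0 t) := by
    have : ContinuousOn (fun s : ℝ => (x, s)) (Icc 0 t) := by fun_prop
    exact hs.continuousOn.comp this (fun s hs => ⟨hxc, hs⟩)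
  have hmono : MonotoneOn (fun s => f s * Real.exp (C * Real.log s)) (Ioc 0 t) := by
    refine monotoneOn_of_deriv_nonneg (convex_Ioc 0 t) ?_ ?_ ?_
    · refine (hcont.mono Ioc_subset_Icc_self).mul ?_
      refine Real.continuous_exp.comp_continuousOn (continuousOn_const.mul ?_)
      exact Real.continuousOn_log.mono (fun s hs => by simpa using hs.1.ne')
    · rw [interior_Ioc]
      intro s hs
      refine DifferentiableAt.differentiableWithinAt ?_
      exact (main s hs).1.mul (((Real.differentiableAt_log hs.1.ne').const_mul C).exp)
    · rw [interior_Ioc]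
      intro s hs
      have hd := (main s hs).1.hasDerivAt.mul (((Real.hasDerivAt_log hs.1.ne').const_mul C).exp)
      have hd' : deriv (fun s => f s * Real.exp (C * Real.log s)) s = _ := hd.deriv
      rw [hd']
      have h2 := (main s hs).2
      have hs0 := hs.1
      have h3 : 0 ≤ deriv f s + f s * (C * s⁻¹) := by
        have : deriv f s + f s * (C * s⁻¹) = (C * f s - s * (-deriv f s)) / s := by
          field_simp; ring
        rw [this]
        exact div_nonneg (by linarith) hs0.le
      have h4 := mul_nonneg h3 (Real.exp_pos (C * Real.log s)).le
      calc (0:ℝ) ≤ _ := h4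
        _ = _ := by ring
  have hd := hdiff.hasDerivAt.mul (((Real.hasDerivAt_log ht.1.ne').const_mul C).exp)
  have h5 := hd.tendsto_slope.mono_left
    (nhdsWithin_mono t (fun s (hs : s < t) => hs.ne) : 𝓝[<] t ≤ 𝓝[≠] t)
  have h6 := ge_of_tendsto h5 (b := 0) (by
    have hev : ∀ᶠ s : ℝ in 𝓝[<] t, s ∈ Ioo 0 t := Ioo_mem_nhdsLT ht.1
    filter_upwards [hev] with s hs
    have h7 := hmono ⟨hs.1, hs.2.le⟩ ⟨ht.1, le_rfl⟩ hs.2.le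
    rw [slope_def_field]
    exact div_nonneg_of_nonpos (sub_nonpos.2 h7) (by linarith [hs.2]))
  have h8 : 0 ≤ (deriv f t + f t * (C * t⁻¹)) * Real.exp (C * Real.log t) := by
    calc (0:ℝ) ≤ _ := h6
      _ = _ := by ring
  have h9 := nonneg_of_mul_nonneg_left h8 (Real.exp_pos _)
  have h10 := mul_nonneg h9 ht.1.le
  have h11 : (deriv f t + f t * (C * t⁻¹)) * t = deriv f t * t + C * f t := by
    have := ht.1.ne'
    field_simp
  rw [h11] at h10
  have : f t = v x t := rfl
  linarith
end

section
/- There is a universal constant C < ∞ with the following property. Let T > 0 and let u : B × [0,T) → (0,∞) be a smooth solution of ∂_t u = Δ log u whose initial value satisfies u(x,0) ≤ h(x) for all x ∈ B∖{0}. Then log u(x,t) ≤ 2/t + C for all x ∈ B_{1/2} and all t ∈ (0, min{1,T}). -/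
open Real MeasureTheory Metric Set Filter Topology

/-- The conformal factor `h(x) = 1/(|x|² (log|x|)²)` of the hyperbolic cusp metric. -/
noncomputable def cuspH (x : EuclideanSpace ℝ (Fin 2)) : ℝ :=
  1 / (‖x‖^2 * (Real.log ‖x‖)^2)

lemma second_test (f f1 : ℝ → ℝ) (f2 : ℝ) (hm : IsLocalMax f 0)
    (h1 : ∀ᶠ τ in 𝓝 (0:ℝ), HasDerivAt f (f1 τ) τ) (h2 : HasDerivAt f1 f2 0) : f2 ≤ 0 := by
  by_contra hc
  push Not at hc
  have e1 : deriv f =ᶠ[𝓝 0] f1 := h1.mono fun τ h => h.deriv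
  have e2 : deriv (deriv f) 0 = f2 := by rw [e1.deriv_eq]; exact h2.deriv
  have hmin : IsLocalMin f 0 := isLocalMin_of_deriv_deriv_pos (by rw [e2]; exact hc)
    hm.deriv_eq_zero h1.self_of_nhds.continuousAt
  have e3 : f =ᶠ[𝓝 0] fun _ => f 0 := by
    filter_upwards [hm, hmin] with τ a b using le_antisymm a b
  have e4 : deriv f =ᶠ[𝓝 0] fun _ => 0 := by
    have := e3.deriv
    filter_upwards [this] with τ h
    rw [h]; simp
  rw [e4.deriv_eq] at e2
  simp at e2
  linarith

lemma slice {E : Type*} [NormedAddCommGroup E] [NormedSpace ℝ E] (f : E → ℝ) (x e : E)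
    (hf : ContDiffAt ℝ 2 f x) :
    ∃ a1 : ℝ → ℝ, (∀ᶠ τ in 𝓝 (0:ℝ), HasDerivAt (fun τ => f (x + τ • e)) (a1 τ) τ) ∧
      HasDerivAt a1 (iteratedFDeriv ℝ 2 f x ![e, e]) 0 := by
  have hline : ∀ τ : ℝ, HasDerivAt (fun τ : ℝ => x + τ • e) e τ := fun τ => by
    simpa using ((hasDerivAt_id τ).smul_const e).const_add x
  refine ⟨fun τ => fderiv ℝ f (x + τ • e) e, ?_, ?_⟩
  · have h1 : ∀ᶠ y in 𝓝 x, ContDiffAt ℝ 2 f y := hf.eventually (by simp)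
    have hc : Tendsto (fun τ : ℝ => x + τ • e) (𝓝 0) (𝓝 x) := by
      have := (hline 0).continuousAt.tendsto
      simpa using this
    filter_upwards [hc.eventually h1] with τ h
    have := (h.differentiableAt (by simp)).hasFDerivAt
    exact this.comp_hasDerivAt τ (hline τ)
  · have h1 : ContDiffAt ℝ 1 (fderiv ℝ f) x := hf.fderiv_right (by norm_num)
    have h2 : HasFDerivAt (fderiv ℝ f) (fderiv ℝ (fderiv ℝ f) x) (x + (0:ℝ) • e) := by
      simpa using (h1.differentiableAt (by simp)).hasFDerivAt
    have h3 := h2.comp_hasDerivAt (0:ℝ) (hline 0)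
    have h4 := h3.clm_apply (hasDerivAt_const (0:ℝ) e)
    rw [iteratedFDeriv_two_apply]
    simpa using h4

lemma sq_le_exp (y : ℝ) (hy : 0 ≤ y) : y ^ 2 ≤ exp y := by
  have h1 := Real.add_one_le_exp (y / 2)
  have h2 := Real.quadratic_le_exp_of_nonneg (x := y/2) (by linarith)
  have h3 : y ≤ exp (y/2) := by nlinarith [sq_nonneg (y - 2)]
  have h4 : exp y = exp (y/2) ^ 2 := by rw [← Real.exp_nat_mul]; congr 1; push_cast; ring
  rw [h4]; gcongr

/-- The strict supersolution inequality. -/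
lemma key (t p : ℝ) (ht : 0 < t) (hp : 0 ≤ p) (hp2 : p < 1/2) (ε s L : ℝ)
    (hε : ε = exp (-2 * (1/t + 8))) (hs : s = p + ε) (hL : L = - log s) (hL0 : 0 < L) :
    16 / (1-2*p)^2 + 8/(s*L^2) - 4 * (ε/s^2) * (1 - 2/L + 2/L^2) <
    (4/((1-2*p)^2 * s * L^2)) * (16 - (1 + 16*t) * (2*ε/t^2) * (1-2/L)/s) := by
  set P := 1/t + 8 with hP
  have ht' : 0 < 1/t := by positivity
  have hε0 : 0 < ε := by rw [hε]; positivity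
  have hs0 : 0 < s := by linarith
  have hsL : s = exp (-L) := by rw [hL, neg_neg, exp_log hs0]
  have hsε : ε ≤ s := by linarith
  have hD : 0 < 1 - 2*p := by linarith
  set D := (1-2*p)^2 with hDd
  have hD0 : 0 < D := by positivity
  have hD1 : D ≤ 1 := by rw [hDd]; nlinarith
  have hsL2 : s * L^2 ≤ 1 := by
    have := sq_le_exp L hL0.le
    calc s * L^2 ≤ s * exp L := by gcongr
      _ = 1 := by rw [hsL, ← exp_add]; simp
  have hP2 : (1+16*t)*(2/t^2) ≤ 2*P^2 := by
    have : (1+16*t)*(2/t^2) = 2*(1/t)^2 + 32*(1/t) := by field_simp; ring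
    rw [this, hP]; nlinarith
  have hεP : ε * P^2 ≤ 1 := by
    have h1 := sq_le_exp P (by positivity)
    calc ε * P^2 ≤ ε * exp P := by gcongr
      _ = exp (-P) := by rw [hε, ← exp_add]; congr 1; ring
      _ ≤ 1 := by rw [exp_le_one_iff]; linarith [hP]
  have red : 2 * D + 4 * (s*L^2) - D * (ε*L^2/s) * (1-2/L+2/L^2)
      < 16 - (1 + 16*t) * (2*ε/t^2) * (1-2/L)/s := by
    have hpos : 0 ≤ D * (ε*L^2/s) * (2/L^2) := by positivity
    have e1 : (1 + 16*t) * (2*ε/t^2) * (1-2/L)/s = ((1+16*t)*(2/t^2)) * (ε/s) * (1-2/L) := by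
      field_simp
    rw [e1]
    rcases le_or_gt L 2 with h2 | h2
    · have hq : 1 - 2/L ≤ 0 := by
        have : 1 ≤ 2/L := by rw [le_div_iff₀ hL0]; linarith
        linarith
      have h3 : ((1+16*t)*(2/t^2)) * (ε/s) * (1-2/L) ≤ 0 :=
        mul_nonpos_of_nonneg_of_nonpos (by positivity) hq
      have h4 : 0 ≤ D * (ε*L^2/s) * (1-2/L+2/L^2) := by
        have : 0 ≤ 1-2/L+2/L^2 := by
          have : 1-2/L+2/L^2 = (1 - 1/L)^2 + (1/L)^2 := by field_simp; ring
          rw [this]; positivity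
        positivity
      linarith
    · have hq : 0 ≤ 1 - 2/L := by
        have : 2/L ≤ 1 := by rw [div_le_one hL0]; linarith
        linarith
      have hq1 : 1 - 2/L ≤ 1 := by
        have : 0 ≤ 2/L := by positivity
        linarith
      set q := 1 - 2/L with hqd
      have h3 : ((1+16*t)*(2/t^2)) * (ε/s) * q ≤ 2*P^2 * (ε/s) * q := by gcongr
      have hy : 0 ≤ 2*P - L := by
        have : log ε ≤ log s := Real.log_le_log hε0 hsε
        rw [hε, log_exp] at this
        linarith
      have h5 : (ε/s) * (2*P^2 - L^2) ≤ 1 := by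
        have h51 : 2*P^2 - L^2 ≤ (2*P-L)^2 := by nlinarith [sq_nonneg (P-L)]
        have h52 := sq_le_exp (2*P-L) hy
        have h53 : ε / s = exp (-(2*P-L)) := by
          rw [hsL, hε, ← exp_sub]; congr 1; ring
        calc (ε/s) * (2*P^2 - L^2) ≤ (ε/s) * exp (2*P-L) := by gcongr; linarith
          _ = 1 := by rw [h53, ← exp_add]; simp
      have h6 : (1 - D) * (2*P^2*(ε/s)) ≤ 8 := by
        have h61 : 1 - D ≤ 4 * s := by rw [hDd]; nlinarith
        calc (1 - D) * (2*P^2*(ε/s)) ≤ (4*s) * (2*P^2*(ε/s)) := by gcongr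
          _ = 8 * (ε*P^2) := by field_simp; ring
          _ ≤ 8 := by linarith
      have h7 : D * (ε*L^2/s) * (q+2/L^2) = D * (ε*L^2/s) * q + D * (ε*L^2/s) * (2/L^2) := by ring
      rw [h7]
      have h8 : 2*P^2 * (ε/s) * q - D * (ε*L^2/s) * q =
        q * ((1 - D) * (2*P^2*(ε/s))) + q * D * ((ε/s) * (2*P^2 - L^2)) := by ring
      have h9 : q * ((1 - D) * (2*P^2*(ε/s))) ≤ 8 := by
        have h0 : 0 ≤ (1 - D) * (2*P^2*(ε/s)) := mul_nonneg (by linarith) (by positivity)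
        exact (mul_le_of_le_one_left h0 hq1).trans h6
      have h10 : q * D * ((ε/s) * (2*P^2 - L^2)) ≤ 1 := by
        have ha : q * D ≤ 1 := mul_le_one₀ hq1 hD0.le hD1
        have hb : 0 ≤ q * D := mul_nonneg hq hD0.le
        exact (mul_le_of_le_one_right hb h5).trans ha
      linarith
  have hm : 0 < 4/(D*s*L^2) := by positivity
  have := mul_lt_mul_of_pos_left red hm
  refine lt_of_eq_of_lt ?_ this
  field_simp
  ring

lemma left_deriv_nonneg (w : ℝ → ℝ) (d t : ℝ) (hw : HasDerivAt w d t)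
    (h : ∀ᶠ s in 𝓝[<] t, w s ≤ w t) : 0 ≤ d := by
  have h1 := hasDerivAt_iff_tendsto_slope.1 hw
  have h2 : Tendsto (slope w t) (𝓝[<] t) (𝓝 d) :=
    h1.mono_left (nhdsWithin_mono _ (fun y hy => ne_of_lt hy))
  refine ge_of_tendsto h2 ?_
  filter_upwards [h, self_mem_nhdsWithin] with s hs hst
  rw [slope_def_field]
  exact div_nonneg_of_nonpos (by linarith) (by have : s < t := hst; linarith)

/-- log of the barrier as a function of `p = |x|²` (spatial part). -/
noncomputable def HH (ε p : ℝ) : ℝ := -2 * log (1-2*p) - log (p+ε) - 2 * log (-log (p+ε))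

noncomputable def HH1 (ε p : ℝ) : ℝ := 4/(1-2*p) - 1/(p+ε) + 2/((p+ε) * (-log (p+ε)))

noncomputable def HH2 (ε p : ℝ) : ℝ :=
  8/(1-2*p)^2 + 1/(p+ε)^2 - 2/((p+ε)^2 * (-log (p+ε))) + 2/((p+ε)^2 * (-log (p+ε))^2)

lemma HH_deriv (ε p : ℝ) (hp : p < 1/2) (hs : 0 < p + ε) (hs1 : p + ε < 1) :
    HasDerivAt (HH ε) (HH1 ε p) p := by
  have hl : log (p+ε) < 0 := Real.log_neg hs hs1
  have h1 : HasDerivAt (fun p : ℝ => 1-2*p) (-2) p := by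
    simpa using ((hasDerivAt_id p).const_mul 2).const_sub 1
  have h2 : HasDerivAt (fun p : ℝ => p+ε) 1 p := (hasDerivAt_id p).add_const ε
  have h3 := (h1.log (by linarith)).const_mul (-2)
  have h4 := h2.log hs.ne'
  have h5 := (h4.neg.log (by simpa using hl.ne)).const_mul 2
  have h6 := (h3.sub h4).sub h5
  refine h6.congr_deriv ?_
  unfold HH1
  have : 1 - 2*p ≠ 0 := by linarith
  have := hl.ne
  simp only [Pi.neg_apply]
  field_simp
  ring

lemma HH1_deriv (ε p : ℝ) (hp : p < 1/2) (hs : 0 < p + ε) (hs1 : p + ε < 1) :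
    HasDerivAt (HH1 ε) (HH2 ε p) p := by
  have hl : log (p+ε) < 0 := Real.log_neg hs hs1
  have hn : 1 - 2*p ≠ 0 := by linarith
  have hl' := hl.ne
  have h1 : HasDerivAt (fun p : ℝ => 1-2*p) (-2) p := by
    simpa using ((hasDerivAt_id p).const_mul 2).const_sub 1
  have h2 : HasDerivAt (fun p : ℝ => p+ε) 1 p := (hasDerivAt_id p).add_const ε
  have h3 := (hasDerivAt_const p (4:ℝ)).div h1 hn
  have h3' := (hasDerivAt_const p (1:ℝ)).div h2 hs.ne'
  have h4 := h2.log hs.ne'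
  have h5 := (hasDerivAt_const p (2:ℝ)).div (h2.mul h4.neg) (mul_ne_zero hs.ne' (neg_ne_zero.2 hl.ne))
  have h6 := (h3.sub h3').add h5
  refine h6.congr_deriv ?_
  unfold HH2
  simp only [Pi.neg_apply, Pi.mul_apply]
  field_simp
  ring

lemma HH_slice (ε p x : ℝ) (hp : p < 1/2) (hs : 0 < p + ε) (hs1 : p + ε < 1) :
    ∃ b1 : ℝ → ℝ,
      (∀ᶠ τ in 𝓝 (0:ℝ), HasDerivAt (fun τ => HH ε (p + 2*τ*x + τ^2)) (b1 τ) τ) ∧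
      HasDerivAt b1 (HH2 ε p * (2*x)^2 + 2 * HH1 ε p) 0 := by
  have hq : ∀ τ : ℝ, HasDerivAt (fun τ : ℝ => p + 2*τ*x + τ^2) (2*x+2*τ) τ := fun τ => by
    have := ((((hasDerivAt_id τ).const_mul 2).mul_const x).const_add p).add
      ((hasDerivAt_id τ).pow 2)
    refine this.congr_deriv ?_
    simp
  refine ⟨fun τ => HH1 ε (p + 2*τ*x + τ^2) * (2*x+2*τ), ?_, ?_⟩
  · have hc : Tendsto (fun τ : ℝ => p + 2*τ*x + τ^2) (𝓝 0) (𝓝 p) := by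
      have := (hq 0).continuousAt.tendsto
      simpa using this
    have e1 : ∀ᶠ y in 𝓝 p, y < 1/2 := eventually_lt_nhds hp
    have e2 : ∀ᶠ y in 𝓝 p, -ε < y := eventually_gt_nhds (by linarith)
    have e3 : ∀ᶠ y in 𝓝 p, y < 1 - ε := eventually_lt_nhds (by linarith)
    filter_upwards [hc.eventually e1, hc.eventually e2, hc.eventually e3] with τ a b c
    exact (HH_deriv ε _ a (by linarith) (by linarith)).comp τ (hq τ)
  · have h1 : HasDerivAt (HH1 ε) (HH2 ε p) (p + 2*0*x + 0^2) := by
      simpa using HH1_deriv ε p hp hs hs1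
    have h2 := h1.comp (0:ℝ) (hq 0)
    have h3 : HasDerivAt (fun τ : ℝ => 2*x+2*τ) 2 0 := by
      simpa using ((hasDerivAt_id (0:ℝ)).const_mul 2).const_add (2*x)
    refine (h2.mul h3).congr_deriv ?_
    simp
    ring

lemma HH_lap (ε p : ℝ) (hp : p < 1/2) (hs : 0 < p + ε) (hs1 : p + ε < 1) :
    4 * HH1 ε p + 4 * p * HH2 ε p =
     16 / (1-2*p)^2 + 8/((p+ε)*(-log (p+ε))^2)
      - 4 * (ε/(p+ε)^2) * (1 - 2/(-log (p+ε)) + 2/(-log (p+ε))^2) := by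
  have hl : log (p+ε) < 0 := Real.log_neg hs hs1
  have hn : 1 - 2*p ≠ 0 := by linarith
  have hl' : -log (p+ε) ≠ 0 := by simpa using hl.ne
  unfold HH1 HH2
  generalize -log (p+ε) = L at *
  obtain ⟨s, hs'⟩ : ∃ s, s = p + ε := ⟨_, rfl⟩
  have : ε = s - p := by linarith
  subst this
  simp only [add_sub_cancel] at *
  field_simp
  ring

noncomputable def ee (t : ℝ) : ℝ := expNegInvGlue (t/2) * exp (-16)

lemma ee_pos_eq (t : ℝ) (ht : 0 < t) : ee t = exp (-2 * (1/t+8)) := by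
  unfold ee expNegInvGlue
  rw [if_neg (by linarith), ← exp_add]
  congr 1
  field_simp
  ring

lemma ee_zero : ee 0 = 0 := by simp [ee]

lemma ee_nonneg (t : ℝ) : 0 ≤ ee t := mul_nonneg (expNegInvGlue.nonneg _) (exp_pos _).le

lemma ee_cont : Continuous ee := by
  have : Continuous expNegInvGlue := (expNegInvGlue.contDiff (n := 0)).continuous
  unfold ee
  fun_prop

lemma ee_lt (t : ℝ) : ee t < 1/4 := by
  have h16 : exp (-16 : ℝ) < 1/4 := by
    have : (16:ℝ) + 1 ≤ exp 16 := Real.add_one_le_exp 16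
    rw [exp_neg, inv_lt_comm₀ (exp_pos _) (by norm_num)]
    norm_num; linarith
  rcases le_or_gt t 0 with h | h
  · have : ee t = 0 := by
      unfold ee; rw [expNegInvGlue.zero_of_nonpos (by linarith)]; simp
    rw [this]; norm_num
  · rw [ee_pos_eq t h]
    refine lt_of_le_of_lt ?_ h16
    apply exp_le_exp.2
    have : 0 < 1/t := by positivity
    linarith

lemma ee_deriv (t : ℝ) (ht : 0 < t) : HasDerivAt ee (2 * ee t / t^2) t := by
  have h1 : HasDerivAt (fun t : ℝ => exp (-2 * (t⁻¹+8))) (exp (-2 * (t⁻¹+8)) * (-2 * (-(t^2)⁻¹))) t :=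
    (((hasDerivAt_inv ht.ne').add_const 8).const_mul (-2)).exp
  have h2 : ee =ᶠ[𝓝 t] (fun t : ℝ => exp (-2 * (t⁻¹+8))) := by
    filter_upwards [eventually_gt_nhds ht] with s hs
    rw [ee_pos_eq s hs, one_div]
  refine (h1.congr_of_eventuallyEq h2).congr_deriv ?_
  rw [ee_pos_eq t ht, one_div]
  field_simp

/-- The barrier. -/
noncomputable def VV (p t : ℝ) : ℝ := 4*(1+16*t)/((1-2*p)^2 * ((p+ee t) * (log (p+ee t))^2))

lemma VV_deriv (p t : ℝ) (ht : 0 < t) (hp : 0 ≤ p) (hp2 : p < 1/2) :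
    HasDerivAt (fun t => VV p t) ((4/((1-2*p)^2 * (p+ee t) * (-log (p+ee t))^2)) *
      (16 - (1 + 16*t) * (2*ee t/t^2) * (1-2/(-log (p+ee t)))/(p+ee t))) t := by
  have he : 0 < ee t := by rw [ee_pos_eq t ht]; positivity
  have hs : 0 < p + ee t := by linarith
  have hs1 : p + ee t < 1 := by linarith [ee_lt t]
  have hl : log (p+ee t) < 0 := Real.log_neg hs hs1
  have hl' := hl.ne
  have hn : 1 - 2*p ≠ 0 := by linarith
  have h1 := (ee_deriv t ht).const_add p
  have h2 := (h1.mul ((h1.log hs.ne').pow 2)).const_mul ((1-2*p)^2)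
  have h3 : HasDerivAt (fun t : ℝ => 4*(1+16*t)) (4*16) t := by
    simpa using (((hasDerivAt_id t).const_mul 16).const_add 1).const_mul 4
  have h4 := h3.div h2 (by
    simp only [Pi.mul_apply, Pi.pow_apply]
    positivity)
  refine h4.congr_deriv ?_
  simp only [Pi.mul_apply, Pi.pow_apply]
  generalize log (p+ee t) = l at *
  generalize p + ee t = s at *
  field_simp
  ring

lemma VV_log (p t : ℝ) (ht : 0 < t) (hp : 0 ≤ p) (hp2 : p < 1/2) :
    log (VV p t) = log (4*(1+16*t)) + HH (ee t) p := by
  have he : 0 < ee t := by rw [ee_pos_eq t ht]; positivity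
  have hs : 0 < p + ee t := by linarith
  have hs1 : p + ee t < 1 := by linarith [ee_lt t]
  have hl : log (p+ee t) < 0 := Real.log_neg hs hs1
  have hl' := hl.ne
  have hn : 1 - 2*p ≠ 0 := by linarith
  unfold VV HH
  rw [log_div (by positivity) (by positivity), log_mul (by positivity) (by positivity),
    log_mul (by positivity) (by positivity), log_mul (by positivity) (by positivity),
    log_pow, log_pow, log_neg_eq_log (log (p+ee t))]
  push_cast
  ring

lemma VV_pos (p t : ℝ) (ht : 0 < t) (hp : 0 ≤ p) (hp2 : p < 1/2) : 0 < VV p t := by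
  have he : 0 < ee t := by rw [ee_pos_eq t ht]; positivity
  have hs : 0 < p + ee t := by linarith
  have hs1 : p + ee t < 1 := by linarith [ee_lt t]
  have hl' := (Real.log_neg hs hs1).ne
  have hn : 1 - 2*p ≠ 0 := by linarith
  unfold VV
  positivity

/-- Reciprocal of the barrier, continuous up to the boundary. -/
noncomputable def RR (p t : ℝ) : ℝ :=
  (1-2*p)^2 * (4 * (√(p+ee t) * log √(p+ee t))^2) / (4*(1+16*t))

lemma sqlog (s : ℝ) (hs : 0 ≤ s) : 4 * (√s * log √s)^2 = s * (log s)^2 := by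
  rw [log_sqrt hs, mul_pow, sq_sqrt hs]; ring

lemma RR_eq (p t : ℝ) (hp : 0 ≤ p) : RR p t = (VV p t)⁻¹ := by
  unfold RR VV
  rw [sqlog _ (by linarith [ee_nonneg t]), inv_div]

lemma RR_cont (K : Set (EuclideanSpace ℝ (Fin 2) × ℝ)) (hK : ∀ q ∈ K, 0 ≤ q.2) :
    ContinuousOn (fun q : EuclideanSpace ℝ (Fin 2) × ℝ => RR (‖q.1‖^2) q.2) K := by
  have h0 : Continuous (fun q : EuclideanSpace ℝ (Fin 2) × ℝ => √(‖q.1‖^2 + ee q.2)) := by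
    have := ee_cont
    fun_prop
  have h1 : Continuous (fun q : EuclideanSpace ℝ (Fin 2) × ℝ =>
      √(‖q.1‖^2+ee q.2) * log √(‖q.1‖^2+ee q.2)) :=
    Real.continuous_mul_log.comp h0
  unfold RR
  apply ContinuousOn.div
  · exact Continuous.continuousOn (by fun_prop)
  · fun_prop
  · intro q hq
    have : 0 ≤ q.2 := hK q hq
    positivity

lemma norm_sq_slice (x : EuclideanSpace ℝ (Fin 2)) (i : Fin 2) (τ : ℝ) :
    ‖x + τ • EuclideanSpace.single i (1:ℝ)‖^2 = ‖x‖^2 + 2*τ*(x i) + τ^2 := by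
  rw [EuclideanSpace.norm_sq_eq, EuclideanSpace.norm_sq_eq, Fin.sum_univ_two, Fin.sum_univ_two]
  fin_cases i <;> simp <;> ring

lemma touch (u : EuclideanSpace ℝ (Fin 2) → ℝ → ℝ) (x : EuclideanSpace ℝ (Fin 2)) (t : ℝ)
    (ht : 0 < t) (hx : ‖x‖^2 < 1/2)
    (hu : ContDiffAt ℝ 2 (fun p : EuclideanSpace ℝ (Fin 2) × ℝ => u p.1 p.2) (x, t))
    (hpos : ∀ᶠ y in 𝓝 x, 0 < u y t)
    (hpde : deriv (fun s => u x s) t = lap (fun y => log (u y t)) x)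
    (heq : u x t = VV (‖x‖^2) t)
    (hsp : ∀ᶠ y in 𝓝 x, u y t ≤ VV (‖y‖^2) t)
    (htm : ∀ᶠ s in 𝓝[<] t, u x s ≤ VV (‖x‖^2) s) : False := by
  have hp0 : 0 ≤ ‖x‖^2 := by positivity
  have he : 0 < ee t := by rw [ee_pos_eq t ht]; positivity
  have hs : 0 < ‖x‖^2 + ee t := by linarith
  have hs1 : ‖x‖^2 + ee t < 1 := by linarith [ee_lt t]
  have hl : log (‖x‖^2+ee t) < 0 := Real.log_neg hs hs1
  have hV := VV_deriv (‖x‖^2) t ht hp0 hx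
  have hut : DifferentiableAt ℝ (fun s => u x s) t := by
    have h1 : DifferentiableAt ℝ (fun p : EuclideanSpace ℝ (Fin 2) × ℝ => u p.1 p.2) (x, t) :=
      hu.differentiableAt (by simp)
    have h2 : DifferentiableAt ℝ (fun s : ℝ => (x, s)) t := by fun_prop
    exact h1.comp t h2
  have ht1 := left_deriv_nonneg _ _ t (hut.hasDerivAt.sub hV) (by
    filter_upwards [htm] with s h
    simp only [Pi.sub_apply]
    linarith)
  have hf : ContDiffAt ℝ 2 (fun y => log (u y t)) x := by
    have h2 : ContDiffAt ℝ 2 (fun y : EuclideanSpace ℝ (Fin 2) => (y, t)) x := by fun_prop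
    have h3 : ContDiffAt ℝ 2 (fun y => u y t) x := ContDiffAt.comp x (f := fun y : EuclideanSpace ℝ (Fin 2) => (y, t)) hu h2
    exact h3.log hpos.self_of_nhds.ne'
  have hball : ∀ᶠ y : EuclideanSpace ℝ (Fin 2) in 𝓝 x, ‖y‖^2 < 1/2 := by
    have : Continuous (fun y : EuclideanSpace ℝ (Fin 2) => ‖y‖^2) := by fun_prop
    exact this.continuousAt.eventually (eventually_lt_nhds hx)
  have hle : ∀ᶠ y in 𝓝 x, log (u y t) - HH (ee t) (‖y‖^2) ≤
      log (u x t) - HH (ee t) (‖x‖^2) := by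
    filter_upwards [hpos, hsp, hball] with y h1 h2 h3
    have h4 := Real.log_le_log h1 h2
    rw [VV_log _ t ht (by positivity) h3] at h4
    rw [heq, VV_log _ t ht hp0 hx]
    linarith
  have hdir : ∀ i : Fin 2, iteratedFDeriv ℝ 2 (fun y => log (u y t)) x
      ![EuclideanSpace.single i 1, EuclideanSpace.single i 1] ≤
      HH2 (ee t) (‖x‖^2) * (2*(x i))^2 + 2 * HH1 (ee t) (‖x‖^2) := by
    intro i
    obtain ⟨a1, ha1, ha2⟩ := slice (fun y => log (u y t)) x (EuclideanSpace.single i 1) hf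
    obtain ⟨b1, hb1, hb2⟩ := HH_slice (ee t) (‖x‖^2) (x i) hx hs hs1
    have hc : Tendsto (fun τ : ℝ => x + τ • EuclideanSpace.single i (1:ℝ)) (𝓝 0) (𝓝 x) := by
      have : Continuous (fun τ : ℝ => x + τ • EuclideanSpace.single i (1:ℝ)) := by fun_prop
      simpa using this.tendsto 0
    have := second_test
      (fun τ => log (u (x + τ • EuclideanSpace.single i (1:ℝ)) t)
        - HH (ee t) (‖x‖^2 + 2*τ*(x i) + τ^2)) (fun τ => a1 τ - b1 τ) _ (by
        filter_upwards [hc.eventually hle] with τ h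
        rw [norm_sq_slice] at h
        simpa using h) (by
        filter_upwards [ha1, hb1] with τ h1 h2
        exact h1.sub h2) (ha2.sub hb2)
    linarith
  have hlap : lap (fun y => log (u y t)) x ≤
      4 * HH1 (ee t) (‖x‖^2) + 4 * ‖x‖^2 * HH2 (ee t) (‖x‖^2) := by
    have h0 := hdir 0
    have h1 := hdir 1
    have h2 : ‖x‖^2 = (x 0)^2 + (x 1)^2 := by
      rw [EuclideanSpace.norm_sq_eq, Fin.sum_univ_two]; simp
    have h3 : 4 * ‖x‖^2 * HH2 (ee t) (‖x‖^2) =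
      4 * ((x 0)^2 + (x 1)^2) * HH2 (ee t) (‖x‖^2) := by rw [← h2]
    rw [h3]
    unfold lap
    linarith
  rw [HH_lap _ _ hx hs hs1] at hlap
  have hk := key t (‖x‖^2) ht hp0 hx (ee t) _ _ (ee_pos_eq t ht) rfl rfl (by linarith)
  linarith

set_option maxHeartbeats 400000 in
/-- Comparison with the barrier. -/
lemma barrier_compare (T : ℝ) (u : EuclideanSpace ℝ (Fin 2) → ℝ → ℝ)
    (hu : ContDiffOn ℝ (⊤ : ℕ∞) (fun p : EuclideanSpace ℝ (Fin 2) × ℝ => u p.1 p.2)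
        (ball 0 1 ×ˢ Ico 0 T))
    (hpos : ∀ x ∈ ball (0 : EuclideanSpace ℝ (Fin 2)) 1, ∀ t ∈ Ico (0:ℝ) T, 0 < u x t)
    (hpde : ∀ x ∈ ball (0 : EuclideanSpace ℝ (Fin 2)) 1, ∀ t ∈ Ico (0:ℝ) T,
        deriv (fun s => u x s) t = lap (fun y => log (u y t)) x)
    (hini : ∀ x ∈ ball (0 : EuclideanSpace ℝ (Fin 2)) 1, x ≠ 0 → u x 0 ≤ cuspH x)
    (x : EuclideanSpace ℝ (Fin 2)) (hx : ‖x‖^2 < 1/2) (t : ℝ) (ht : 0 < t) (htT : t < T) :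
    u x t ≤ VV (‖x‖^2) t := by
  have hsub : ∀ y : EuclideanSpace ℝ (Fin 2), ‖y‖^2 ≤ 1/2 → y ∈ ball (0 : EuclideanSpace ℝ (Fin 2)) 1 := by
    intro y hy
    rw [mem_ball_zero_iff]
    nlinarith [norm_nonneg y]
  have hnsq : ∀ y : EuclideanSpace ℝ (Fin 2), y ∈ closedBall (0 : EuclideanSpace ℝ (Fin 2)) (√(1/2)) ↔ ‖y‖^2 ≤ 1/2 := by
    intro y
    rw [mem_closedBall_zero_iff]
    rw [Real.le_sqrt (norm_nonneg y) (by norm_num)]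
  set Q : EuclideanSpace ℝ (Fin 2) × ℝ → ℝ := fun q => u q.1 q.2 * RR (‖q.1‖^2) q.2 with hQ
  set K := closedBall (0 : EuclideanSpace ℝ (Fin 2)) (√(1/2)) ×ˢ Icc 0 t with hK
  have hKc : IsCompact K := (isCompact_closedBall _ _).prod isCompact_Icc
  have hQc : ContinuousOn Q K := by
    have hA : ContinuousOn (fun q : EuclideanSpace ℝ (Fin 2) × ℝ => u q.1 q.2) K := by
      apply hu.continuousOn.mono
      rintro ⟨y, s⟩ ⟨h1, h2⟩
      exact ⟨hsub y ((hnsq y).1 h1), h2.1, lt_of_le_of_lt h2.2 htT⟩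
    have hB : ContinuousOn (fun q : EuclideanSpace ℝ (Fin 2) × ℝ => RR (‖q.1‖^2) q.2) K :=
      RR_cont K (fun q hq => hq.2.1)
    exact hA.mul hB
  by_contra hcon
  push Not at hcon
  have hQV : ∀ y : EuclideanSpace ℝ (Fin 2), ∀ s : ℝ, ‖y‖^2 < 1/2 → 0 < s → 
      (1 ≤ Q (y, s) ↔ VV (‖y‖^2) s ≤ u y s) := by
    intro y s hy hs
    have hv := VV_pos (‖y‖^2) s hs (by positivity) hy
    simp only [hQ]
    rw [RR_eq _ _ (by positivity), ← div_eq_mul_inv, one_le_div hv]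
  set S := K ∩ Q ⁻¹' (Ici 1) with hS
  have hSc : IsCompact S := by
    have := hQc.preimage_isClosed_of_isClosed hKc.isClosed (isClosed_Ici (a := (1:ℝ)))
    exact hKc.of_isClosed_subset this inter_subset_left
  have hSne : S.Nonempty := ⟨(x, t), ⟨(hnsq x).2 hx.le, ht.le, le_rfl⟩, (hQV x t hx ht).2 hcon.le⟩
  obtain ⟨⟨x0, t0⟩, ⟨⟨hx0, ht0⟩, hq0⟩, hmin⟩ := hSc.exists_isMinOn hSne
    (f := fun q : EuclideanSpace ℝ (Fin 2) × ℝ => q.2) continuous_snd.continuousOn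
  have hx0' := (hnsq x0).1 hx0
  have hq0' : 1 ≤ Q (x0, t0) := hq0
  have ht0' : 0 ≤ t0 := ht0.1
  have hxlt : ‖x0‖^2 < 1/2 := by
    rcases lt_or_eq_of_le hx0' with h | h
    · exact h
    · exfalso
      simp only [hQ, h, RR] at hq0'
      norm_num at hq0'
  have htpos : 0 < t0 := by
    rcases lt_or_eq_of_le ht0' with h | h
    · exact h
    · exfalso
      subst h
      simp only [hQ] at hq0'
      rw [RR_eq _ _ (by positivity)] at hq0'
      by_cases hz : x0 = 0
      · subst hz
        simp [VV, ee_zero] at hq0'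
        linarith
      · have hn : 0 < ‖x0‖ := norm_pos_iff.2 hz
        have h1 := hini x0 (hsub x0 hx0') hz
        have hl : log ‖x0‖ < 0 := Real.log_neg hn (mem_ball_zero_iff.1 (hsub x0 hx0'))
        have hl' := hl.ne
        have hh : 0 < cuspH x0 := by unfold cuspH; positivity
        have h2 : (VV (‖x0‖^2) 0)⁻¹ = (1-2*‖x0‖^2)^2 * (cuspH x0)⁻¹ := by
          unfold VV cuspH
          rw [ee_zero, add_zero, log_pow]
          push_cast
          field_simp
          ring
        rw [h2] at hq0'
        have h3 : u x0 0 * ((1-2*‖x0‖^2)^2 * (cuspH x0)⁻¹) ≤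
            cuspH x0 * ((1-2*‖x0‖^2)^2 * (cuspH x0)⁻¹) := by gcongr
        have h4 : cuspH x0 * ((1-2*‖x0‖^2)^2 * (cuspH x0)⁻¹) = (1-2*‖x0‖^2)^2 := by
          field_simp
        have h5 : 0 < ‖x0‖^2 := by positivity
        nlinarith
  have hlt : ∀ y : EuclideanSpace ℝ (Fin 2), ∀ s : ℝ, ‖y‖^2 < 1/2 → 0 < s → s < t0 →
      u y s < VV (‖y‖^2) s := by
    intro y s hy hs hst
    by_contra hc
    push Not at hc
    have hmem : (y, s) ∈ S :=
      ⟨⟨(hnsq y).2 hy.le, hs.le, hst.le.trans ht0.2⟩, (hQV y s hy hs).2 hc⟩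
    have := hmin hmem
    simp only [mem_ofPred_eq] at this
    linarith
  have ht0T : t0 < T := lt_of_le_of_lt ht0.2 htT
  have hCD : ∀ y : EuclideanSpace ℝ (Fin 2), ‖y‖^2 < 1/2 → ContDiffAt ℝ (⊤ : ℕ∞)
      (fun p : EuclideanSpace ℝ (Fin 2) × ℝ => u p.1 p.2) (y, t0) := by
    intro y hy
    apply hu.contDiffAt
    exact prod_mem_nhds (isOpen_ball.mem_nhds (hsub y hy.le)) (Ico_mem_nhds htpos ht0T)
  have hevlt : ∀ᶠ s in 𝓝[<] t0, 0 < s := 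
    (eventually_gt_nhds htpos).filter_mono nhdsWithin_le_nhds
  have hle : ∀ y : EuclideanSpace ℝ (Fin 2), ‖y‖^2 < 1/2 → u y t0 ≤ VV (‖y‖^2) t0 := by
    intro y hy
    have c1 : ContinuousAt (fun s => u y s) t0 := by
      have h2 : ContinuousAt (fun s : ℝ => (y, s)) t0 := by fun_prop
      exact ContinuousAt.comp (f := fun s : ℝ => (y, s)) (hCD y hy).continuousAt h2
    have c2 : ContinuousAt (fun s => VV (‖y‖^2) s) t0 :=
      (VV_deriv (‖y‖^2) t0 htpos (by positivity) hy).continuousAt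
    refine le_of_tendsto_of_tendsto (c1.tendsto.mono_left nhdsWithin_le_nhds)
      (c2.tendsto.mono_left nhdsWithin_le_nhds) (f := fun s => u y s) (b := 𝓝[<] t0) ?_
    filter_upwards [hevlt, self_mem_nhdsWithin] with s hs hst
    exact (hlt y s hy hs hst).le
  have hball : ∀ᶠ y : EuclideanSpace ℝ (Fin 2) in 𝓝 x0, ‖y‖^2 < 1/2 := by
    have : Continuous (fun y : EuclideanSpace ℝ (Fin 2) => ‖y‖^2) := by fun_prop
    exact this.continuousAt.eventually (eventually_lt_nhds hxlt)
  refine touch u x0 t0 htpos hxlt (contDiffAt_infty.1 (hCD x0 hxlt) 2) ?_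
    (hpde x0 (hsub x0 hx0') t0 ⟨ht0', ht0T⟩) ?_ ?_ ?_
  · filter_upwards [hball] with y hy
    exact hpos y (hsub y hy.le) t0 ⟨ht0', ht0T⟩
  · exact le_antisymm (hle x0 hxlt) ((hQV x0 t0 hxlt htpos).1 hq0')
  · filter_upwards [hball] with y hy using hle y hy
  · filter_upwards [hevlt, self_mem_nhdsWithin] with s hs hst
    exact (hlt x0 s hxlt hs hst).le

/-- **Smoothing estimate.** There is a universal constant `C` such that any smooth
positive solution of `∂ₜ u = Δ log u` on `B × [0,T)` with `u(·,0) ≤ h` on `B∖{0}`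
satisfies `log u ≤ 2/t + C` on `B_{1/2}` for `t ∈ (0, min{1,T})`. -/
theorem cusp_smoothing_estimate :
    ∃ C : ℝ, ∀ (T : ℝ) (u : EuclideanSpace ℝ (Fin 2) → ℝ → ℝ),
      0 < T →
      ContDiffOn ℝ (⊤ : ℕ∞) (fun p : EuclideanSpace ℝ (Fin 2) × ℝ => u p.1 p.2)
        (ball 0 1 ×ˢ Ico 0 T) →
      (∀ x ∈ ball (0 : EuclideanSpace ℝ (Fin 2)) 1, ∀ t ∈ Ico (0:ℝ) T, 0 < u x t) →
      (∀ x ∈ ball (0 : EuclideanSpace ℝ (Fin 2)) 1, ∀ t ∈ Ico (0:ℝ) T,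
        deriv (fun s => u x s) t = lap (fun y => log (u y t)) x) →
      (∀ x ∈ ball (0 : EuclideanSpace ℝ (Fin 2)) 1, x ≠ 0 → u x 0 ≤ cuspH x) →
      ∀ x ∈ ball (0 : EuclideanSpace ℝ (Fin 2)) (1/2), ∀ t : ℝ, 0 < t → t < min 1 T →
        log (u x t) ≤ 2 / t + C := by
  refine ⟨log 68 + 2 * log 2 + 16 - 2 * log (log 2), ?_⟩
  intro T u _ hu hpos hpde hini x hx t ht htm
  have ht1 : t < 1 := lt_of_lt_of_le htm (min_le_left _ _)
  have htT : t < T := lt_of_lt_of_le htm (min_le_right _ _)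
  rw [mem_ball_zero_iff] at hx
  have hx2 : ‖x‖^2 < 1/4 := by nlinarith [norm_nonneg x]
  have hp0 : 0 ≤ ‖x‖^2 := by positivity
  have hxb : x ∈ ball (0 : EuclideanSpace ℝ (Fin 2)) 1 := by
    rw [mem_ball_zero_iff]; linarith
  have h1 := barrier_compare T u hu hpos hpde hini x (by linarith) t ht htT
  have h2 := Real.log_le_log (hpos x hxb t ⟨ht.le, htT⟩) h1
  rw [VV_log _ t ht hp0 (by linarith)] at h2
  refine h2.trans ?_
  have he : 0 < ee t := by rw [ee_pos_eq t ht]; positivity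
  have a1 : log (4*(1+16*t)) ≤ log 68 := Real.log_le_log (by positivity) (by linarith)
  have a2 : -log 2 ≤ log (1-2*‖x‖^2) := by
    rw [← log_inv]
    exact Real.log_le_log (by norm_num) (by norm_num; linarith)
  have a3 : -2*(1/t+8) ≤ log (‖x‖^2 + ee t) := by
    have := Real.log_le_log he (show ee t ≤ ‖x‖^2 + ee t by linarith)
    rwa [ee_pos_eq t ht, log_exp, ← ee_pos_eq t ht] at this
  have a4 : log (log 2) ≤ log (-log (‖x‖^2 + ee t)) := by
    apply Real.log_le_log (Real.log_pos (by norm_num))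
    have : log (‖x‖^2 + ee t) ≤ log (2⁻¹) :=
      Real.log_le_log (by linarith) (by norm_num; linarith [ee_lt t])
    rw [log_inv] at this
    linarith
  have a5 : 2/t = 2*(1/t) := by ring
  unfold HH
  rw [a5]
  generalize log (4*(1+16*t)) = z1 at *
  generalize log (1-2*‖x‖^2) = z2 at *
  generalize log (-log (‖x‖^2 + ee t)) = z3 at *
  generalize log (‖x‖^2 + ee t) = z4 at *
  generalize log (log 2) = z5 at *
  generalize log 2 = z6 at *
  generalize log 68 = z7 at *
  generalize 1/t = z8 at *
  linarith
end

section
/- Let 0 < r0 < e^{-1}. Then for all r ∈ (0,1), ε(r0)/(δ(r0) + r²) ≤ 1/(r²(log r)²), with equality if and only if r = r0. -/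
open Real Set

lemma cigar_key (a s : ℝ) (ha : 1 < a) (hs : -a < s) (hne : s ≠ 0) :
    (a + s)^2 < a * (exp s ^ 2 + (a - 1)) := by
  have hE := add_one_lt_exp hne
  have hp := exp_pos s
  rcases le_or_gt s (-1) with h | h
  · have h2 : -s < exp s ^ 2 - 1 - 2 * s := by nlinarith [pow_pos hp 2]
    have h3 : a * (-s) < a * (exp s ^ 2 - 1 - 2 * s) :=
      mul_lt_mul_of_pos_left h2 (by linarith)
    nlinarith
  · have h2 : s ^ 2 < exp s ^ 2 - 1 - 2 * s := by nlinarith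
    have h4 : 0 < s ^ 2 := by positivity
    nlinarith

/-- **The tangent cigar lies below the cusp.** For `0 < r₀ < e⁻¹`, with
`δ(r₀) = r₀²/(-log r₀ - 1)` and `ε(r₀) = 1/((-log r₀)(-log r₀ - 1))`, one has
`ε/(δ + r²) ≤ 1/(r² (log r)²)` for all `r ∈ (0,1)`, with equality iff `r = r₀`. -/
theorem cigar_touches_cusp (r0 : ℝ) (h0 : 0 < r0) (h1 : r0 < exp (-1)) :
    ∀ r ∈ Ioo (0:ℝ) 1,
      (1 / ((-log r0) * (-log r0 - 1))) / (r0^2 / (-log r0 - 1) + r^2)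
          ≤ 1 / (r^2 * (log r)^2)
        ∧ ((1 / ((-log r0) * (-log r0 - 1))) / (r0^2 / (-log r0 - 1) + r^2)
            = 1 / (r^2 * (log r)^2) ↔ r = r0) := by
  intro r hr
  obtain ⟨hr0, hr1⟩ := hr
  have ha : 1 < -log r0 := by
    have := log_lt_log h0 h1
    rw [log_exp] at this
    linarith
  have ht : log r < 0 := log_neg hr0 hr1
  have hform : (1 / ((-log r0) * (-log r0 - 1))) / (r0^2 / (-log r0 - 1) + r^2)
      = 1 / ((-log r0) * (r0 ^ 2 + (-log r0 - 1) * r ^ 2)) := by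
    generalize -log r0 = a at ha
    have h1 : 0 < a - 1 := by linarith
    have h2 : 0 < r0 ^ 2 + (a - 1) * r ^ 2 := by positivity
    have h3 : r0^2 / (a - 1) + r^2 = (r0 ^ 2 + (a - 1) * r ^ 2) / (a - 1) := by
      field_simp
    rw [h3]
    field_simp
  rw [hform]
  have hpos : 0 < r ^ 2 * (log r) ^ 2 := by
    have := ht.ne
    positivity
  by_cases h : r = r0
  · subst h
    have : (-log r) * (r ^ 2 + (-log r - 1) * r ^ 2) = r ^ 2 * (log r) ^ 2 := by ring
    rw [this]
    simp
  · have hne : log (r0 / r) ≠ 0 := by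
      rw [log_div h0.ne' hr0.ne']
      intro h'
      exact h (log_injOn_pos hr0 h0 (by linarith))
    have hk := cigar_key (-log r0) (log (r0 / r)) ha
      (by rw [log_div h0.ne' hr0.ne']; linarith) hne
    rw [exp_log (by positivity), log_div h0.ne' hr0.ne'] at hk
    have hlt : r ^ 2 * (log r) ^ 2 < (-log r0) * (r0 ^ 2 + (-log r0 - 1) * r ^ 2) := by
      have := mul_lt_mul_of_pos_left hk (pow_pos hr0 2)
      have e : r ^ 2 * (-log r0 * ((r0 / r) ^ 2 + (-log r0 - 1)))
          = (-log r0) * (r0 ^ 2 + (-log r0 - 1) * r ^ 2) := by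
        field_simp
      rw [e] at this
      calc _ = _ := by ring
        _ < _ := this
    have := one_div_lt_one_div_of_lt hpos hlt
    exact ⟨this.le, fun h' => absurd h' this.ne, fun h' => absurd h' h⟩
end

section
/- The functions u_{r0} : B → ℝ are pointwise decreasing in r0: if 0 < r0 ≤ r0' < e^{-1}, then u_{r0'}(x) ≤ u_{r0}(x) for every x ∈ B. -/
open Real MeasureTheory Metric Set Filter Topology

/-- The `C¹` approximation `u_{r₀}` of the cusp: a cigar cap
`ε(r₀)/(δ(r₀)+|x|²)` for `|x| ≤ r₀`, and the cusp `h` for `|x| > r₀`. -/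
noncomputable def ucig (r0 : ℝ) (x : EuclideanSpace ℝ (Fin 2)) : ℝ :=
  if ‖x‖ ≤ r0 then
    (1 / ((-Real.log r0) * (-Real.log r0 - 1))) / (r0^2 / (-Real.log r0 - 1) + ‖x‖^2)
  else cuspH x

/-- Monotonicity of the reciprocal `L (r² + (L-1) s²)` of the cap, `L = -log r`. -/
theorem cap_mono (s a b : ℝ) (hs : 0 ≤ s) (ha : 0 < a) (hsa : s ≤ a) (hab : a ≤ b)
    (hb : b < exp (-1)) :
    (-Real.log a) * (a^2 + (-Real.log a - 1) * s^2)
      ≤ (-Real.log b) * (b^2 + (-Real.log b - 1) * s^2) := by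
  have hb0 : 0 < b := ha.trans_le hab
  have hM : Real.log b < -1 := (Real.log_lt_iff_lt_exp hb0).2 hb
  have hlog : Real.log a ≤ Real.log b := Real.log_le_log ha hab
  obtain ⟨d, hd⟩ : ∃ d, d = Real.log b - Real.log a := ⟨_, rfl⟩
  have hd0 : 0 ≤ d := by linarith
  obtain ⟨M, hMe⟩ : ∃ M, M = -Real.log b := ⟨_, rfl⟩
  have hM1 : 1 < M := by linarith
  have hLa : -Real.log a = M + d := by linarith
  have hq := Real.quadratic_le_exp_of_nonneg (x := 2 * d) (by linarith)
  have hb2 : b^2 = a^2 * exp (2 * d) := by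
    have : b = a * exp d := by
      rw [hd, Real.exp_sub, Real.exp_log hb0, Real.exp_log ha]; field_simp
    rw [this, two_mul, Real.exp_add]; ring
  rw [hLa, ← hMe, hb2]
  have hs2 : s^2 ≤ a^2 := by gcongr
  have e1 : d * (2 * M + d - 1) * s^2 ≤ d * (2 * M + d - 1) * a^2 :=
    mul_le_mul_of_nonneg_left hs2 (mul_nonneg hd0 (by linarith))
  have e2 : M + d * (2 * M + d) ≤ M * exp (2 * d) := by
    have := mul_le_mul_of_nonneg_left hq (by linarith : 0 ≤ M)
    nlinarith [mul_nonneg (sq_nonneg d) (by linarith : 0 ≤ M - 1), sq_nonneg d]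
  have e3 := mul_le_mul_of_nonneg_left e2 (sq_nonneg a)
  nlinarith [e1, e3]

theorem cap_eq (s a : ℝ) (ha : 0 < a) (hb : a < exp (-1)) :
    (1 / ((-Real.log a) * (-Real.log a - 1))) / (a^2 / (-Real.log a - 1) + s^2)
      = 1 / ((-Real.log a) * (a^2 + (-Real.log a - 1) * s^2)) := by
  have hM : Real.log a < -1 := (Real.log_lt_iff_lt_exp ha).2 hb
  obtain ⟨M, hMe⟩ : ∃ M, M = -Real.log a := ⟨_, rfl⟩
  rw [← hMe]
  have hM1 : 0 < M - 1 := by linarith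
  have : a^2 + (M - 1) * s^2 = (M - 1) * (a^2 / (M - 1) + s^2) := by field_simp
  rw [this, div_div, mul_assoc]

theorem cap_pos (s a : ℝ) (ha : 0 < a) (hb : a < exp (-1)) :
    0 < (-Real.log a) * (a^2 + (-Real.log a - 1) * s^2) := by
  have hM : Real.log a < -1 := (Real.log_lt_iff_lt_exp ha).2 hb
  have h1 : 0 < -Real.log a - 1 := by linarith
  have h2 : 0 < -Real.log a := by linarith
  positivity

/-- **Monotonicity of the approximations.** The functions `u_{r₀}` are pointwise
decreasing in `r₀`: if `0 < r₀ ≤ r₀' < e⁻¹` then `u_{r₀'} ≤ u_{r₀}` on `B`. -/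
theorem ucig_decreasing_in_r0 (r0 r0' : ℝ) (h0 : 0 < r0) (h01 : r0 ≤ r0')
    (h1 : r0' < exp (-1)) :
    ∀ x ∈ ball (0 : EuclideanSpace ℝ (Fin 2)) 1, ucig r0' x ≤ ucig r0 x := by
  intro x _
  have h1' : r0 < exp (-1) := h01.trans_lt h1
  have h0' : 0 < r0' := h0.trans_le h01
  unfold ucig
  by_cases hx : ‖x‖ ≤ r0
  · rw [if_pos hx, if_pos (hx.trans h01), cap_eq _ _ h0 h1', cap_eq _ _ h0' h1]
    exact one_div_le_one_div_of_le (cap_pos _ _ h0 h1')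
      (cap_mono _ _ _ (norm_nonneg x) h0 hx h01 h1)
  · rw [if_neg hx]
    by_cases hx' : ‖x‖ ≤ r0'
    · rw [if_pos hx', cap_eq _ _ h0' h1]
      have hp : 0 < ‖x‖ := h0.trans (not_le.1 hx)
      have hc : cuspH x = 1 / ((-Real.log ‖x‖) * (‖x‖^2 + (-Real.log ‖x‖ - 1) * ‖x‖^2)) := by
        unfold cuspH; congr 1; ring
      rw [hc]
      exact one_div_le_one_div_of_le (cap_pos _ _ hp (hx'.trans_lt h1))
        (cap_mono _ _ _ hp.le hp le_rfl hx' h1)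
    · rw [if_neg hx']
end
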